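/- arXiv:1409.3634 — 5 statements merged into one kernel-verified Lean document; each statement's English description precedes it below -/
import Mathlib

section
/- Let n and k be integers with 2 ≤ k ≤ n/2 and let τ > 0. Then the Kneser graph K(n,k) is ((1+τ)·(k/n), τ/(1+τ))-supersaturated; that is, every set S of vertices of K(n,k) with |S| ≥ (1+τ)·(k/n)·C(n,k) satisfies e(S) ≥ (τ/(1+τ)) · (|S|/C(n,k))² · e(K(n,k)). -/
open MeasureTheory Filter Finset

noncomputable section

/-- The binomial random subset measure on `V → Bool`: each coordinate is `true`
independently with probability `p`. -/
def bernMeasure (V : Type*) [Fintype V] (p : ℝ) : Measure (V → Bool) :=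
  Measure.pi fun _ => (PMF.bernoulli (min (Real.toNNReal p) 1) (min_le_right _ _)).toMeasure

/-- Vertices of the Kneser graph: `k`-element subsets of `[n]`. -/
abbrev KVert (n k : ℕ) := {A : Finset (Fin n) // A.card = k}

/-- The Kneser graph `K(n,k)`. -/
def kneser (n k : ℕ) : SimpleGraph (KVert n k) where
  Adj A B := A ≠ B ∧ Disjoint A.1 B.1
  symm := ⟨fun A B h => ⟨h.1.symm, h.2.symm⟩⟩
  loopless := ⟨fun A h => h.1 rfl⟩

/-- Total number of edges of a graph. -/
def eTotal {V : Type*} [Fintype V] (G : SimpleGraph V) : ℕ := Nat.card G.edgeSet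

/-- Number of edges of `G` with both endpoints in `S`. -/
def eCount {V : Type*} [Fintype V] (G : SimpleGraph V) (S : Finset V) : ℕ :=
  Nat.card (G.induce (S : Set V)).edgeSet

/-- `S` is an independent set of `G`. -/
def IsIndep {V : Type*} (G : SimpleGraph V) (S : Finset V) : Prop :=
  ∀ a ∈ S, ∀ b ∈ S, ¬ G.Adj a b

/-- Independence number of the subgraph of `G` induced on `{v | ω v = true}`. -/
def alphaSub {V : Type*} [Fintype V] (G : SimpleGraph V) (ω : V → Bool) : ℕ :=
  sSup {m | ∃ S : Finset V, (∀ v ∈ S, ω v = true) ∧ IsIndep G S ∧ S.card = m}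

/-- The size of a largest intersecting subfamily of the random hypergraph
determined by `ω`. -/
def maxIntersecting (n k : ℕ) (ω : KVert n k → Bool) : ℕ :=
  sSup {m | ∃ F : Finset (KVert n k), (∀ A ∈ F, ω A = true) ∧
    (∀ A ∈ F, ∀ B ∈ F, (A.1 ∩ B.1).Nonempty) ∧ F.card = m}

/-- `(λ,γ)`-supersaturation. -/
def Supersaturated {V : Type*} [Fintype V] (G : SimpleGraph V) (lam gam : ℝ) : Prop :=
  ∀ S : Finset V, lam * Fintype.card V ≤ S.card →
    gam * ((S.card : ℝ) / Fintype.card V) ^ 2 * eTotal G ≤ eCount G S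

/-- `(λ,B)`-stability with respect to `(ε,δ)`. -/
def StableWrt {V : Type*} [Fintype V] [DecidableEq V] (G : SimpleGraph V) (lam : ℝ)
    (B : Set (Finset V)) (eps del : ℝ) : Prop :=
  ∀ S : Finset V, (1 - del) * lam * Fintype.card V ≤ S.card →
    (del * ((S.card : ℝ) / Fintype.card V) ^ 2 * eTotal G ≤ eCount G S) ∨
    ∃ b ∈ B, ((S \ b).card : ℝ) ≤ eps * lam * Fintype.card V

end

/-!
Let `G` be `d`-regular on `N` vertices, with every eigenvalue on the complement of the all-ones
vector at least `-c`. Evaluating the adjacency form at the indicator vector of `S` gives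
`2 e(S) ≥ (d + c) |S|² / N - c |S|`, and the subtracted term is at most a `1 / (1 + τ)` fraction of
the first once `|S| ≥ (1 + τ) (c / (d + c)) N`.

For `K(n,k)` one can take `c = C(n-k-1,k-1)`, and then `c / (d + c) = k / n`. The eigenvalues are
found without decomposing the space of functions on `k`-sets: given an eigenvector `v`, take a
minimal set `J` whose superset sum `∑_{A ⊇ J} v A` does not vanish. By inclusion-exclusion, the sum
of `v` over the sets disjoint from `J` is `(-1)^|J|` times that superset sum, so summing the
eigenvalue equation over `A ⊇ J` yields the eigenvalue `(-1)^|J| C(n-k-|J|,k-|J|)`. If `v` sums to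
zero then `J` is nonempty, and the absolute value is largest for `|J| = 1`.
-/

open Matrix

section Spectral

variable {V : Type*}

/-- The adjacency matrix of `G`, shifted by `c` and with `b` subtracted from every entry. For a
`d`-regular graph on `V` the choice `b = (d + c) / |V|` moves the eigenvalue `d + c` of the
all-ones vector to zero and leaves the action on its orthogonal complement unchanged. -/
def deflatedAdjMatrix [DecidableEq V] (G : SimpleGraph V) [DecidableRel G.Adj] (c b : ℝ) :
    Matrix V V ℝ :=
  G.adjMatrix ℝ + c • 1 - b • Matrix.of fun _ _ => 1

lemma deflatedAdjMatrix_isHermitian [DecidableEq V] (G : SimpleGraph V) [DecidableRel G.Adj]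
    (c b : ℝ) : (deflatedAdjMatrix G c b).IsHermitian := by
  ext x y
  simp [deflatedAdjMatrix, Matrix.one_apply, G.adj_comm, eq_comm]

variable [Fintype V]

lemma two_mul_eTotal_of_isRegularOfDegree {G : SimpleGraph V} [DecidableRel G.Adj] {d : ℕ}
    (hG : G.IsRegularOfDegree d) : 2 * eTotal G = Fintype.card V * d := by
  classical
  rw [eTotal, Nat.card_eq_fintype_card, ← SimpleGraph.edgeFinset_card,
    ← G.sum_degrees_eq_twice_card_edges, sum_congr rfl fun v _ => hG v, sum_const, card_univ,
    smul_eq_mul]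

lemma two_mul_eCount_eq_dotProduct {R : Type*} [NonAssocSemiring R] (G : SimpleGraph V)
    [DecidableRel G.Adj] (S : Finset V) :
    2 * (eCount G S : R) =
      Set.indicator (S : Set V) 1 ⬝ᵥ G.adjMatrix R *ᵥ Set.indicator (S : Set V) 1 := by
  classical
  have card_dart : 2 * eCount G S = Fintype.card (G.induce (S : Set V)).Dart := by
    rw [eCount, Nat.card_eq_fintype_card, ← SimpleGraph.edgeFinset_card,
      SimpleGraph.dart_card_eq_twice_card_edges]
  calc 2 * (eCount G S : R)
      = ∑ a ∈ S, ∑ b ∈ S, if G.Adj a b then 1 else 0 := by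
        rw [← Nat.cast_two, ← Nat.cast_mul, card_dart,
          SimpleGraph.natCast_card_dart_eq_dotProduct]
        simp only [dotProduct_one, mulVec, SimpleGraph.adjMatrix_apply,
          SimpleGraph.comap_adj, Function.Embedding.subtype_apply]
        rw [← sum_coe_sort S]
        refine sum_congr rfl fun a _ => ?_
        rw [← sum_coe_sort S]
        rfl
    _ = _ := by
        simp only [SimpleGraph.dotProduct_mulVec_adjMatrix, Set.indicator_apply, mem_coe,
          Pi.one_apply, ite_mul, one_mul, zero_mul, ← ite_and, and_comm (a := G.Adj _ _)]
        simp [ite_and]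

/-- Every eigenvalue of the adjacency matrix of `G` that has an eigenvector orthogonal to the
all-ones vector is at least `a`. For a regular graph this bounds all eigenvalues but the degree,
which is constrained only if its multiplicity exceeds one. -/
def NontrivialEigenvaluesGE (G : SimpleGraph V) [DecidableRel G.Adj] (a : ℝ) : Prop :=
  ∀ (v : V → ℝ) (μ : ℝ), v ≠ 0 → ∑ x, v x = 0 → G.adjMatrix ℝ *ᵥ v = μ • v → a ≤ μ

open scoped ComplexOrder in
lemma posSemidef_of_forall_mulVec_eq_smul {𝕜 : Type*} [RCLike 𝕜] {M : Matrix V V 𝕜}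
    (hM : M.IsHermitian) (h : ∀ (v : V → 𝕜) (μ : ℝ), v ≠ 0 → M *ᵥ v = μ • v → 0 ≤ μ) :
    M.PosSemidef := by
  classical
  refine hM.posSemidef_iff_eigenvalues_nonneg.2 fun i => h _ _ ?_ (hM.mulVec_eigenvectorBasis i)
  simpa using hM.eigenvectorBasis.orthonormal.ne_zero i

variable {G : SimpleGraph V} [DecidableRel G.Adj] {d : ℕ}

lemma sum_adjMatrix_mulVec_of_isRegularOfDegree {R : Type*} [CommSemiring R]
    (hG : G.IsRegularOfDegree d) (v : V → R) :
    ∑ x, (G.adjMatrix R *ᵥ v) x = d * ∑ x, v x := by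
  have vecMul_one : 1 ᵥ* G.adjMatrix R = fun _ => (d : R) := by
    ext x
    simp [hG.degree_eq x]
  rw [← one_dotProduct, dotProduct_mulVec, vecMul_one, mul_sum]
  rfl

lemma deflatedAdjMatrix_mulVec_apply [DecidableEq V] (c b : ℝ) (v : V → ℝ) (x : V) :
    (deflatedAdjMatrix G c b *ᵥ v) x = (G.adjMatrix ℝ *ᵥ v) x + c * v x - b * ∑ y, v y := by
  have of_one_mulVec : (Matrix.of fun _ _ : V => (1 : ℝ)) *ᵥ v = fun _ => ∑ y, v y := by
    ext
    simp [mulVec, dotProduct]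
  simp only [deflatedAdjMatrix, sub_mulVec, add_mulVec, smul_mulVec, one_mulVec, of_one_mulVec,
    Pi.sub_apply, Pi.add_apply, Pi.smul_apply, smul_eq_mul]

variable {c : ℝ}

lemma deflatedAdjMatrix_posSemidef [DecidableEq V] (hG : G.IsRegularOfDegree d)
    (hc : NontrivialEigenvaluesGE G (-c)) :
    (deflatedAdjMatrix G c ((d + c) / Fintype.card V)).PosSemidef := by
  set b := (d + c) / Fintype.card V with hb
  refine posSemidef_of_forall_mulVec_eq_smul (deflatedAdjMatrix_isHermitian G c b)
    fun v μ hv hμ => ?_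
  have apply_eq (x : V) : (G.adjMatrix ℝ *ᵥ v) x + c * v x - b * ∑ y, v y = μ * v x := by
    rw [← deflatedAdjMatrix_mulVec_apply, hμ, Pi.smul_apply, smul_eq_mul]
  have mul_sum_eq_zero : μ * ∑ x, v x = 0 := by
    obtain ⟨x₀, -⟩ := Function.ne_iff.1 hv
    have card_ne_zero : (Fintype.card V : ℝ) ≠ 0 := by
      exact_mod_cast (Fintype.card_pos_iff.2 ⟨x₀⟩).ne'
    calc μ * ∑ x, v x
        = ∑ x, ((G.adjMatrix ℝ *ᵥ v) x + c * v x - b * ∑ y, v y) := by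
          rw [mul_sum, sum_congr rfl fun x _ => apply_eq x]
      _ = (d + c - Fintype.card V * b) * ∑ x, v x := by
          rw [sum_sub_distrib, sum_add_distrib, sum_adjMatrix_mulVec_of_isRegularOfDegree hG,
            ← mul_sum, sum_const, card_univ, nsmul_eq_mul]
          ring
      _ = 0 := by rw [hb, mul_div_cancel₀ _ card_ne_zero, sub_self, zero_mul]
  rcases mul_eq_zero.1 mul_sum_eq_zero with hμ0 | hsum
  · exact hμ0.ge
  · have shifted : G.adjMatrix ℝ *ᵥ v = (μ - c) • v := by
      ext x
      have := apply_eq x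
      rw [hsum] at this
      simp only [Pi.smul_apply, smul_eq_mul]
      linarith
    linarith [hc v (μ - c) hv hsum shifted]

lemma le_two_mul_eCount (hG : G.IsRegularOfDegree d) (hc : NontrivialEigenvaluesGE G (-c))
    (S : Finset V) :
    (d + c) / Fintype.card V * #S ^ 2 - c * #S ≤ 2 * (eCount G S : ℝ) := by
  classical
  set χ : V → ℝ := Set.indicator (S : Set V) 1 with hχ
  set b := (d + c) / Fintype.card V
  have sum_χ : ∑ x, χ x = #S := by simp [hχ, Set.indicator_apply]
  have χ_dotProduct_χ : χ ⬝ᵥ χ = #S := by simp [hχ, dotProduct, Set.indicator_apply]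
  have deflated_mulVec_χ : deflatedAdjMatrix G c b *ᵥ χ =
      G.adjMatrix ℝ *ᵥ χ + c • χ - (b * #S) • 1 := by
    ext x
    simp [deflatedAdjMatrix_mulVec_apply, sum_χ]
  have nonneg : 0 ≤ 2 * (eCount G S : ℝ) + c * #S - b * #S * #S := by
    calc 0 ≤ χ ⬝ᵥ deflatedAdjMatrix G c b *ᵥ χ :=
          (deflatedAdjMatrix_posSemidef hG hc).dotProduct_mulVec_nonneg χ
      _ = 2 * (eCount G S : ℝ) + c * #S - b * #S * #S := by
          rw [deflated_mulVec_χ, dotProduct_sub, dotProduct_add, dotProduct_smul, dotProduct_smul,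
            ← two_mul_eCount_eq_dotProduct, χ_dotProduct_χ, dotProduct_one, sum_χ, smul_eq_mul,
            smul_eq_mul]
  linarith

theorem supersaturated_of_nontrivialEigenvaluesGE (hG : G.IsRegularOfDegree d) (hc0 : 0 ≤ c)
    (hc : NontrivialEigenvaluesGE G (-c)) {τ : ℝ} (hτ : 0 ≤ τ) :
    Supersaturated G ((1 + τ) * (c / (d + c))) (τ / (1 + τ)) := by
  intro S hS
  rcases (Nat.cast_nonneg (α := ℝ) (Fintype.card V)).eq_or_lt with card_eq_zero | card_pos
  · simp [← card_eq_zero]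
  set σ := (#S : ℝ) / Fintype.card V with hσ
  have card_S : (#S : ℝ) = σ * Fintype.card V := (div_mul_cancel₀ _ card_pos.ne').symm
  have σ_nonneg : 0 ≤ σ := div_nonneg (Nat.cast_nonneg _) card_pos.le
  have ratio_le : (1 + τ) * (c / (d + c)) ≤ σ := (le_div_iff₀ card_pos).2 hS
  have c_le : (1 + τ) * c ≤ (d + c) * σ := by
    calc (1 + τ) * c = (d + c) * ((1 + τ) * (c / (d + c))) := by
          rw [mul_left_comm, mul_div_cancel_of_imp' fun h => ?_]
          linarith [Nat.cast_nonneg (α := ℝ) d]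
      _ ≤ (d + c) * σ := by gcongr
  have mul_density_le : τ / (1 + τ) * (d * σ) ≤ (d + c) * σ - c := by
    rw [div_mul_eq_mul_div, div_le_iff₀ (by positivity)]
    linarith [mul_nonneg hτ (mul_nonneg hc0 σ_nonneg)]
  have two_mul_eTotal : 2 * (eTotal G : ℝ) = Fintype.card V * d := by
    exact_mod_cast two_mul_eTotal_of_isRegularOfDegree hG
  suffices 2 * (τ / (1 + τ) * σ ^ 2 * eTotal G) ≤ 2 * (eCount G S : ℝ) by linarith
  calc 2 * (τ / (1 + τ) * σ ^ 2 * eTotal G)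
      = #S * (τ / (1 + τ) * (d * σ)) := by
        rw [card_S]
        linear_combination τ / (1 + τ) * σ ^ 2 * two_mul_eTotal
    _ ≤ #S * ((d + c) * σ - c) := mul_le_mul_of_nonneg_left mul_density_le (Nat.cast_nonneg _)
    _ = (d + c) / Fintype.card V * #S ^ 2 - c * #S := by
        rw [hσ]
        ring
    _ ≤ 2 * (eCount G S : ℝ) := le_two_mul_eCount hG hc S

end Spectral

lemma card_filter_subset_disjoint {α : Type*} [Fintype α] [DecidableEq α] {k : ℕ}
    {J B : Finset α} (hJB : Disjoint J B) (hJk : #J ≤ k) :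
    #{A ∈ powersetCard k (univ : Finset α) | J ⊆ A ∧ Disjoint A B} =
      (Fintype.card α - #B - #J).choose (k - #J) := by
  have filter_eq : {A ∈ powersetCard k (univ : Finset α) | J ⊆ A ∧ Disjoint A B} =
      {A ∈ powersetCard k Bᶜ | J ⊆ A} := by
    ext A
    simp only [mem_filter, mem_powersetCard, subset_univ, true_and, subset_compl_iff_disjoint_right]
    tauto
  rw [filter_eq, card_filter_powersetCard_subset _ _ _ (subset_compl_iff_disjoint_right.2 hJB) hJk,
    card_compl]

lemma choose_sub_sub_le_choose_sub_sub {m k i j : ℕ} (hkm : k ≤ m) (hij : i ≤ j) (hjk : j ≤ k) :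
    (m - j).choose (k - j) ≤ (m - i).choose (k - i) := by
  rw [← Nat.choose_symm_of_eq_add (show m - j = (m - k) + (k - j) by omega),
    ← Nat.choose_symm_of_eq_add (show m - i = (m - k) + (k - i) by omega)]
  exact Nat.choose_le_choose _ (by omega)

section Kneser

variable {n k : ℕ}

instance : DecidableRel (kneser n k).Adj := fun A B =>
  inferInstanceAs (Decidable (A ≠ B ∧ Disjoint A.1 B.1))

lemma kneser_adj_iff_disjoint (hk : k ≠ 0) {A B : KVert n k} :
    (kneser n k).Adj A B ↔ Disjoint A.1 B.1 := by
  refine ⟨And.right, fun h => ⟨?_, h⟩⟩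
  rintro rfl
  exact hk (by rw [← A.2, card_eq_zero]; simpa using h)

lemma card_filter_kVert_subset_disjoint {J : Finset (Fin n)} {B : KVert n k}
    (hJB : Disjoint J B.1) (hJk : #J ≤ k) :
    #{A : KVert n k | J ⊆ A.1 ∧ Disjoint A.1 B.1} = (n - k - #J).choose (k - #J) := by
  have map_filter_eq : ({A : KVert n k | J ⊆ A.1 ∧ Disjoint A.1 B.1} : Finset (KVert n k)).map
      (Function.Embedding.subtype _) =
        {A ∈ powersetCard k (univ : Finset (Fin n)) | J ⊆ A ∧ Disjoint A B.1} := by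
    ext A
    simp only [Finset.mem_map, mem_filter, mem_univ, true_and, Function.Embedding.subtype_apply,
      Subtype.exists, exists_and_right, exists_eq_right, mem_powersetCard, subset_univ]
    tauto
  rw [← card_map, map_filter_eq, card_filter_subset_disjoint hJB hJk, Fintype.card_fin, B.2]

lemma kneser_isRegularOfDegree (hk : k ≠ 0) :
    (kneser n k).IsRegularOfDegree ((n - k).choose k) := by
  intro B
  have := card_filter_kVert_subset_disjoint (disjoint_empty_left B.1) (Nat.zero_le k)
  simp only [empty_subset, true_and, card_empty, Nat.sub_zero] at this
  rw [← this, ← SimpleGraph.card_neighborFinset_eq_degree, SimpleGraph.neighborFinset_eq_filter]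
  simp only [kneser_adj_iff_disjoint hk, disjoint_comm]

variable {R : Type*}

/-- The sum of a weight function on the `k`-subsets of `[n]` over the sets containing `J`. -/
def supersetSum [AddCommMonoid R] (v : KVert n k → R) (J : Finset (Fin n)) : R :=
  ∑ A : KVert n k with J ⊆ A.1, v A

lemma supersetSum_empty [AddCommMonoid R] (v : KVert n k → R) :
    supersetSum v ∅ = ∑ A, v A := by
  simp [supersetSum]

lemma supersetSum_coe [AddCommMonoid R] (v : KVert n k → R) (A : KVert n k) :
    supersetSum v A.1 = v A := by
  have filter_eq : ({B : KVert n k | A.1 ⊆ B.1} : Finset (KVert n k)) = {A} := by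
    ext B
    simp only [mem_filter, mem_univ, true_and, mem_singleton]
    refine ⟨fun h => Subtype.ext (eq_of_subset_of_card_le h ?_).symm, fun h => h ▸ Subset.rfl⟩
    rw [A.2, B.2]
  rw [supersetSum, filter_eq, sum_singleton]

lemma supersetSum_eq_zero_of_lt_card [AddCommMonoid R] (v : KVert n k → R) {J : Finset (Fin n)}
    (hJ : k < #J) : supersetSum v J = 0 := by
  refine sum_eq_zero fun A hA => ?_
  have := card_le_card (mem_filter.1 hA).2
  have := A.2
  omega

lemma sum_filter_disjoint_eq_sum_powerset [AddCommGroup R] (v : KVert n k → R)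
    (J : Finset (Fin n)) :
    ∑ B : KVert n k with Disjoint J B.1, v B =
      ∑ I ∈ J.powerset, (-1 : ℤ) ^ #I • supersetSum v I := by
  let containing (i : Fin n) : Finset (KVert n k) := {B | i ∈ B.1}
  have inf_compl_containing : (J.inf fun i => (containing i)ᶜ) =
      ({B | Disjoint J B.1} : Finset (KVert n k)) := by
    ext B
    simp [containing, mem_inf, Finset.disjoint_left]
  have inf_containing (I : Finset (Fin n)) :
      I.inf containing = ({B | I ⊆ B.1} : Finset (KVert n k)) := by
    ext B
    simp [containing, mem_inf, subset_iff]
  simpa only [inf_compl_containing, inf_containing, supersetSum] using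
    inclusion_exclusion_sum_inf_compl J containing v

lemma supersetSum_adjMatrix_mulVec [NonAssocSemiring R] (hk : k ≠ 0) (v : KVert n k → R)
    {J : Finset (Fin n)} (hJk : #J ≤ k) :
    supersetSum ((kneser n k).adjMatrix R *ᵥ v) J =
      (n - k - #J).choose (k - #J) * ∑ B : KVert n k with Disjoint J B.1, v B := by
  have card_filter (B : KVert n k) :
      (#{A : KVert n k | J ⊆ A.1 ∧ Disjoint A.1 B.1} : R) =
        if Disjoint J B.1 then ((n - k - #J).choose (k - #J) : R) else 0 := by
    split_ifs with hJB
    · rw [card_filter_kVert_subset_disjoint hJB hJk]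
    · have : ∀ A : KVert n k, ¬(J ⊆ A.1 ∧ Disjoint A.1 B.1) :=
        fun A h => hJB (disjoint_of_subset_left h.1 h.2)
      simp [this]
  calc supersetSum ((kneser n k).adjMatrix R *ᵥ v) J
      = ∑ A : KVert n k with J ⊆ A.1, ∑ B : KVert n k with Disjoint A.1 B.1, v B := by
        simp only [supersetSum, SimpleGraph.adjMatrix_mulVec_apply,
          SimpleGraph.neighborFinset_eq_filter, kneser_adj_iff_disjoint hk]
    _ = ∑ B : KVert n k, #{A : KVert n k | J ⊆ A.1 ∧ Disjoint A.1 B.1} * v B := by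
        simp only [sum_filter (fun B : KVert n k => Disjoint _ B.1)]
        rw [sum_comm]
        simp only [← sum_filter, filter_filter, sum_const, nsmul_eq_mul]
    _ = (n - k - #J).choose (k - #J) * ∑ B : KVert n k with Disjoint J B.1, v B := by
        simp only [card_filter, ite_mul, zero_mul, mul_sum, sum_filter, mul_ite, mul_zero]

variable [CommRing R] {v : KVert n k → R}

lemma sum_filter_disjoint_of_minimal {J : Finset (Fin n)}
    (hJ : Minimal (fun I => supersetSum v I ≠ 0) J) :
    ∑ B : KVert n k with Disjoint J B.1, v B = (-1) ^ #J * supersetSum v J := by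
  rw [sum_filter_disjoint_eq_sum_powerset, sum_eq_single_of_mem J (mem_powerset_self J)]
  · simp [zsmul_eq_mul]
  · intro I hI hIJ
    have : supersetSum v I = 0 := not_not.1
      (hJ.not_prop_of_lt ((mem_powerset.1 hI).ssubset_of_ne hIJ))
    rw [this, smul_zero]

lemma kneser_exists_eigenvalue_eq [NoZeroDivisors R] (hk : k ≠ 0) (hv : v ≠ 0) {μ : R}
    (hμ : (kneser n k).adjMatrix R *ᵥ v = μ • v) :
    ∃ J : Finset (Fin n), #J ≤ k ∧ supersetSum v J ≠ 0 ∧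
      μ = (-1) ^ #J * (n - k - #J).choose (k - #J) := by
  obtain ⟨A, hA⟩ := Function.ne_iff.1 hv
  obtain ⟨J, hJ⟩ := exists_minimal_of_wellFoundedLT (fun J => supersetSum v J ≠ 0)
    ⟨A.1, by rwa [supersetSum_coe]⟩
  have hJk : #J ≤ k := not_lt.1 fun h => hJ.prop (supersetSum_eq_zero_of_lt_card v h)
  refine ⟨J, hJk, hJ.prop, mul_right_cancel₀ hJ.prop ?_⟩
  calc μ * supersetSum v J
      = supersetSum ((kneser n k).adjMatrix R *ᵥ v) J := by
        simp only [hμ, supersetSum, mul_sum, Pi.smul_apply, smul_eq_mul]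
    _ = (n - k - #J).choose (k - #J) * ((-1) ^ #J * supersetSum v J) := by
        rw [supersetSum_adjMatrix_mulVec hk v hJk, sum_filter_disjoint_of_minimal hJ]
    _ = (-1) ^ #J * (n - k - #J).choose (k - #J) * supersetSum v J := by ring

lemma kneser_nontrivialEigenvaluesGE (hk : k ≠ 0) (hkn : 2 * k ≤ n) :
    NontrivialEigenvaluesGE (kneser n k) (-(n - k - 1).choose (k - 1)) := by
  intro v μ hv hsum hμ
  obtain ⟨J, hJk, hJ, rfl⟩ := kneser_exists_eigenvalue_eq hk hv hμ
  have hJ1 : 1 ≤ #J := by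
    rw [Nat.one_le_iff_ne_zero, Ne, card_eq_zero]
    rintro rfl
    exact hJ (by rw [supersetSum_empty, hsum])
  calc -((n - k - 1).choose (k - 1) : ℝ)
      ≤ -((n - k - #J).choose (k - #J) : ℝ) := by
        gcongr
        exact choose_sub_sub_le_choose_sub_sub (by omega) hJ1 hJk
    _ ≤ (-1) ^ #J * (n - k - #J).choose (k - #J) := by
        rcases neg_one_pow_eq_or ℝ #J with h | h <;> simp [h]

lemma choose_sub_div_choose_add_choose_sub (hk : k ≠ 0) (hkn : 2 * k ≤ n) :
    ((n - k - 1).choose (k - 1) : ℝ) / ((n - k).choose k + (n - k - 1).choose (k - 1)) =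
      k / n := by
  have sub_mul_choose : ((n : ℝ) - k) * (n - k - 1).choose (k - 1) = (n - k).choose k * k := by
    have := Nat.add_one_mul_choose_eq (n - k - 1) (k - 1)
    rw [Nat.sub_add_cancel (by omega), Nat.sub_add_cancel (by omega)] at this
    rw [← Nat.cast_sub (by omega)]
    exact_mod_cast this
  have choose_pos : (0 : ℝ) < (n - k).choose k := by
    exact_mod_cast Nat.choose_pos (by omega : k ≤ n - k)
  have n_ne_zero : (n : ℝ) ≠ 0 := by exact_mod_cast (by omega : n ≠ 0)
  rw [div_eq_div_iff (by positivity) n_ne_zero]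
  linear_combination sub_mul_choose

end Kneser

/-- The Kneser graph `K(n,k)` is `((1+τ)k/n, τ/(1+τ))`-supersaturated. -/
theorem kneser_supersaturated (n k : ℕ) (hk2 : 2 ≤ k) (hkn : 2 * k ≤ n)
    (τ : ℝ) (hτ : 0 < τ)
    (S : Finset (KVert n k))
    (hS : (1 + τ) * ((k : ℝ) / n) * (n.choose k : ℝ) ≤ S.card) :
    τ / (1 + τ) * ((S.card : ℝ) / (n.choose k : ℝ)) ^ 2 * eTotal (kneser n k) ≤
      (eCount (kneser n k) S : ℝ) := by
  have hk : k ≠ 0 := by omega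
  have h := supersaturated_of_nontrivialEigenvaluesGE (kneser_isRegularOfDegree hk)
    (Nat.cast_nonneg _) (kneser_nontrivialEigenvaluesGE hk hkn) hτ.le
  rw [choose_sub_div_choose_add_choose_sub hk hkn, Supersaturated, Fintype.card_finset_len,
    Fintype.card_fin] at h
  exact h S hS
end

section
/- For every 0 < ε < 1 the following holds. Let {G_n} be a sequence of graphs where G_n has N = N(n) vertices with N(n) → ∞ and average degree D = D(n), and let p = p(n) ∈ (0,1] satisfy p·N → ∞ and p·D → 0. Let H_n = G_n[V_p] be the subgraph of G_n induced on the binomial random subset V_p of the vertex set. Then asymptotically almost surely (1−ε)·p·N ≤ α(H_n) ≤ (1+ε)·p·N, where α(H_n) is the independence number of H_n. -/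
open MeasureTheory Filter Finset

/-!
The sampled set has `pN` vertices in expectation, with variance at most `pN`, so by Chebyshev its
size is within `εpN/2` of `pN` with high probability as soon as `ε²pN → ∞`. It spans
`p²e(G) = pN · pD / 2` edges in expectation, so by Markov it spans fewer than `εpN/2` edges with
high probability as soon as `pD/ε → 0`. Deleting one endpoint of each spanned edge leaves an
independent set, so the independence number of the sampled graph lies between the number of sampled
vertices minus the number of spanned edges and the number of sampled vertices.
-/

section IndepNum

variable {V : Type*} [Finite V] (G : SimpleGraph V)

lemma indepNum_le_natCard : G.indepNum ≤ Nat.card V := by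
  have := Fintype.ofFinite V
  obtain ⟨s, hs⟩ := G.exists_isNIndepSet_indepNum
  rw [← hs.card_eq, Nat.card_eq_fintype_card]
  exact card_le_univ s

lemma natCard_le_indepNum_add_natCard_edgeSet :
    Nat.card V ≤ G.indepNum + Nat.card G.edgeSet := by
  have := Fintype.ofFinite V
  classical
  obtain ⟨cover, hcard, hcover⟩ := G.vertexCoverNum_exists
  have cover_le : cover.ncard ≤ Nat.card G.edgeSet := by
    rw [Nat.card_coe_set_eq, ← Nat.cast_le (α := ℕ∞), cover.toFinite.cast_ncard_eq,
      G.edgeSet.toFinite.cast_ncard_eq, hcard]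
    exact G.vertexCoverNum_le_encard_edgeSet
  have compl_le : coverᶜ.ncard ≤ G.indepNum := by
    rw [Set.ncard_eq_toFinset_card']
    refine SimpleGraph.IsIndepSet.card_le_indepNum ?_
    rwa [Set.coe_toFinset, SimpleGraph.isIndepSet_compl_iff_isVertexCover]
  have := cover.ncard_add_ncard_compl
  omega

end IndepNum

section SampledSet

variable {V : Type*} [Fintype V]

/-- The random vertex set `V_p`, as a function of the outcome `ω` of the coin flips. -/
def sampledSet (ω : V → Bool) : Finset V := {v | ω v}

lemma mem_sampledSet {ω : V → Bool} {v : V} : v ∈ sampledSet ω ↔ ω v = true := by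
  simp [sampledSet]

lemma alphaSub_eq_indepNum_induce (G : SimpleGraph V) (ω : V → Bool) :
    alphaSub G ω = (G.induce (sampledSet ω : Set V)).indepNum := by
  classical
  refine congrArg sSup (Set.ext fun m => ⟨?_, ?_⟩)
  · rintro ⟨S, hS, hindep, rfl⟩
    have hS' : ∀ v ∈ S, v ∈ (sampledSet ω : Set V) := fun v hv => mem_sampledSet.2 (hS v hv)
    refine ⟨S.subtype (· ∈ (sampledSet ω : Set V)), fun a ha b hb _ => ?_, ?_⟩
    · exact hindep a (by simpa using ha) b (by simpa using hb)
    · rw [card_subtype, filter_true_of_mem hS']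
  · rintro ⟨T, hindep, rfl⟩
    refine ⟨T.map (.subtype _), fun v hv => ?_, fun a ha b hb hab => ?_, card_map _⟩
    · obtain ⟨u, -, rfl⟩ := mem_map.1 hv
      exact mem_sampledSet.1 u.2
    · obtain ⟨u, hu, rfl⟩ := mem_map.1 ha
      obtain ⟨w, hw, rfl⟩ := mem_map.1 hb
      exact hindep hu hw (fun huw => hab.ne (congrArg _ huw)) hab

lemma alphaSub_le_card_sampledSet (G : SimpleGraph V) (ω : V → Bool) :
    alphaSub G ω ≤ #(sampledSet ω) := by
  rw [alphaSub_eq_indepNum_induce]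
  simpa using indepNum_le_natCard (G.induce (sampledSet ω : Set V))

lemma card_sampledSet_le_alphaSub_add_eCount (G : SimpleGraph V) (ω : V → Bool) :
    #(sampledSet ω) ≤ alphaSub G ω + eCount G (sampledSet ω) := by
  rw [alphaSub_eq_indepNum_induce]
  simpa [eCount] using natCard_le_indepNum_add_natCard_edgeSet (G.induce (sampledSet ω : Set V))

lemma abs_alphaSub_sub_lt (G : SimpleGraph V) {ω : V → Bool} {m s t : ℝ}
    (size_near : |(#(sampledSet ω) : ℝ) - m| < s) (edges_lt : eCount G (sampledSet ω) < t) :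
    |(alphaSub G ω : ℝ) - m| < s + t := by
  have upper : (alphaSub G ω : ℝ) ≤ #(sampledSet ω) := mod_cast alphaSub_le_card_sampledSet G ω
  have lower : (#(sampledSet ω) : ℝ) ≤ alphaSub G ω + eCount G (sampledSet ω) :=
    mod_cast card_sampledSet_le_alphaSub_add_eCount G ω
  have edges_nonneg : (0 : ℝ) ≤ eCount G (sampledSet ω) := Nat.cast_nonneg _
  rw [abs_lt] at size_near ⊢
  constructor <;> linarith

lemma eCount_eq_card_filter [DecidableEq V] (G : SimpleGraph V) [DecidableRel G.Adj]
    (S : Finset V) : eCount G S = #{e ∈ G.edgeFinset | e.toFinset ⊆ S} := by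
  rw [eCount, G.card_filter_edgeFinset_toFinset_subset, Nat.card_eq_fintype_card,
    SimpleGraph.edgeFinset_card]

end SampledSet

lemma integral_card_filter {Ω ι : Type*} [MeasurableSpace Ω] {μ : Measure Ω} [IsFiniteMeasure μ]
    (s : Finset ι) (P : Ω → ι → Prop) [∀ ω, DecidablePred (P ω)]
    (hP : ∀ i ∈ s, MeasurableSet {ω | P ω i}) :
    ∫ ω, (#{i ∈ s | P ω i} : ℝ) ∂μ = ∑ i ∈ s, μ.real {ω | P ω i} := by
  have card_eq (ω : Ω) : (#{i ∈ s | P ω i} : ℝ) = ∑ i ∈ s, {ω | P ω i}.indicator 1 ω := by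
    simp [Set.indicator_apply]
  simp_rw [card_eq]
  rw [integral_finsetSum s fun i hi => (integrable_const 1).indicator (hP i hi)]
  exact sum_congr rfl fun i hi => integral_indicator_one (hP i hi)

section Moments

variable {V : Type*} [Fintype V] {p : ℝ}

instance isProbabilityMeasure_bernMeasure (V : Type*) [Fintype V] (p : ℝ) :
    IsProbabilityMeasure (bernMeasure V p) := by
  unfold bernMeasure
  infer_instance

lemma bernMeasure_real_subset_sampledSet (hp0 : 0 ≤ p) (hp1 : p ≤ 1) (T : Finset V) :
    (bernMeasure V p).real {ω | T ⊆ sampledSet ω} = p ^ #T := by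
  have event_eq : {ω : V → Bool | T ⊆ sampledSet ω} = Set.pi T fun _ => {true} := by
    ext ω
    simp [Finset.subset_iff, mem_sampledSet]
  rw [event_eq, measureReal_def, bernMeasure, Measure.pi_pi_finset]
  simp [PMF.bernoulli_apply, hp0, hp1]

lemma integral_card_filter_subset_sampledSet [DecidableEq V] {ι : Type*} (hp0 : 0 ≤ p)
    (hp1 : p ≤ 1) (s : Finset ι) (T : ι → Finset V) :
    ∫ ω, (#{i ∈ s | T i ⊆ sampledSet ω} : ℝ) ∂bernMeasure V p = ∑ i ∈ s, p ^ #(T i) := by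
  rw [integral_card_filter s _ fun i _ => Set.Finite.measurableSet (Set.toFinite _)]
  simp_rw [bernMeasure_real_subset_sampledSet hp0 hp1]

lemma integral_card_sampledSet (hp0 : 0 ≤ p) (hp1 : p ≤ 1) :
    ∫ ω, (#(sampledSet ω) : ℝ) ∂bernMeasure V p = p * Fintype.card V := by
  classical
  simpa [mul_comm] using
    integral_card_filter_subset_sampledSet hp0 hp1 (univ : Finset V) fun v => {v}

lemma integral_card_sampledSet_sq (hp0 : 0 ≤ p) (hp1 : p ≤ 1) :
    ∫ ω, (#(sampledSet ω) : ℝ) ^ 2 ∂bernMeasure V p =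
      p * (1 - p) * Fintype.card V + (p * Fintype.card V) ^ 2 := by
  classical
  have sq_eq (ω : V → Bool) : (#(sampledSet ω) : ℝ) ^ 2 =
      #{uv : V × V | {uv.1, uv.2} ⊆ sampledSet ω} := by
    rw [sq, ← Nat.cast_mul, ← card_product]
    congr 2
    ext uv
    simp [Finset.insert_subset_iff]
  have prob_pair (u v : V) : p ^ #{u, v} = p ^ 2 + if u = v then p * (1 - p) else 0 := by
    split_ifs with huv
    · rw [huv, pair_eq_singleton, card_singleton]
      ring
    · rw [card_pair huv, add_zero]
  simp_rw [sq_eq]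
  rw [integral_card_filter_subset_sampledSet hp0 hp1, ← univ_product_univ, sum_product]
  simp_rw [prob_pair, sum_add_distrib]
  simp only [sum_const, card_univ, nsmul_eq_mul, sum_ite_eq, mem_univ, ↓reduceIte]
  ring

lemma integral_eCount_sampledSet (G : SimpleGraph V) (hp0 : 0 ≤ p) (hp1 : p ≤ 1) :
    ∫ ω, (eCount G (sampledSet ω) : ℝ) ∂bernMeasure V p = p ^ 2 * eTotal G := by
  classical
  simp_rw [eCount_eq_card_filter]
  rw [integral_card_filter_subset_sampledSet hp0 hp1]
  have prob_edge : ∀ e ∈ G.edgeFinset, p ^ #e.toFinset = p ^ 2 := fun e he => by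
    rw [Sym2.card_toFinset_of_not_isDiag e (G.not_isDiag_of_mem_edgeFinset he)]
  rw [sum_congr rfl prob_edge, sum_const, nsmul_eq_mul, mul_comm, eTotal,
    Nat.card_eq_fintype_card, SimpleGraph.edgeFinset_card]

open ProbabilityTheory in
lemma variance_card_sampledSet (hp0 : 0 ≤ p) (hp1 : p ≤ 1) :
    Var[fun ω => (#(sampledSet ω) : ℝ); bernMeasure V p] = p * (1 - p) * Fintype.card V := by
  rw [variance_eq_sub .of_discrete, integral_card_sampledSet hp0 hp1]
  simp [integral_card_sampledSet_sq hp0 hp1]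

end Moments

section Concentration

variable {V : Type*} [Fintype V] {p s t ε : ℝ}

open ProbabilityTheory in
lemma bernMeasure_real_le_abs_card_sampledSet_sub (hp0 : 0 ≤ p) (hp1 : p ≤ 1) (ht : 0 < t) :
    (bernMeasure V p).real {ω | t ≤ |(#(sampledSet ω) : ℝ) - p * Fintype.card V|} ≤
      p * (1 - p) * Fintype.card V / t ^ 2 := by
  have chebyshev := meas_ge_le_variance_div_sq (μ := bernMeasure V p)
    (X := fun ω => (#(sampledSet ω) : ℝ)) .of_discrete ht
  rw [integral_card_sampledSet hp0 hp1, variance_card_sampledSet hp0 hp1] at chebyshev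
  have := sub_nonneg.2 hp1
  exact ENNReal.toReal_le_of_le_ofReal (by positivity) chebyshev

lemma bernMeasure_real_le_eCount_sampledSet (G : SimpleGraph V) (hp0 : 0 ≤ p) (hp1 : p ≤ 1)
    (ht : 0 < t) :
    (bernMeasure V p).real {ω | t ≤ eCount G (sampledSet ω)} ≤ p ^ 2 * eTotal G / t := by
  rw [le_div_iff₀' ht, ← integral_eCount_sampledSet G hp0 hp1]
  exact mul_meas_ge_le_integral_of_nonneg (.of_forall fun ω => Nat.cast_nonneg _)
    .of_finite t

lemma bernMeasure_real_le_abs_alphaSub_sub (G : SimpleGraph V) (hp0 : 0 ≤ p) (hp1 : p ≤ 1)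
    (hs : 0 < s) (ht : 0 < t) :
    (bernMeasure V p).real {ω | s + t ≤ |(alphaSub G ω : ℝ) - p * Fintype.card V|} ≤
      p * (1 - p) * Fintype.card V / s ^ 2 + p ^ 2 * eTotal G / t := by
  set atypicalSize := {ω : V → Bool | s ≤ |(#(sampledSet ω) : ℝ) - p * Fintype.card V|}
  set manyEdges := {ω : V → Bool | t ≤ eCount G (sampledSet ω)}
  calc
    _ ≤ (bernMeasure V p).real (atypicalSize ∪ manyEdges) := measureReal_mono fun ω hω => by
      by_contra hgood
      obtain ⟨size_near, edges_lt⟩ := not_or.1 hgood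
      exact (abs_alphaSub_sub_lt G (not_le.1 size_near) (not_le.1 edges_lt)).not_ge hω
    _ ≤ (bernMeasure V p).real atypicalSize + (bernMeasure V p).real manyEdges :=
      measureReal_union_le _ _
    _ ≤ _ := add_le_add (bernMeasure_real_le_abs_card_sampledSet_sub hp0 hp1 hs)
      (bernMeasure_real_le_eCount_sampledSet G hp0 hp1 ht)

lemma one_sub_le_bernMeasure_real_alphaSub (G : SimpleGraph V) (hp1 : p ≤ 1)
    (hpN : 0 < p * Fintype.card V) (hε : 0 < ε) :
    1 - (4 / (ε ^ 2 * (p * Fintype.card V)) + p * (2 * eTotal G / Fintype.card V) / ε) ≤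
      (bernMeasure V p).real {ω | (1 - ε) * (p * Fintype.card V) ≤ alphaSub G ω ∧
        alphaSub G ω ≤ (1 + ε) * (p * Fintype.card V)} := by
  have hp0 : 0 < p := pos_of_mul_pos_left hpN (Nat.cast_nonneg _)
  have hN : (0 : ℝ) < Fintype.card V := pos_of_mul_pos_right hpN hp0.le
  set δ := ε * (p * Fintype.card V) / 2 with hδ
  have δ_pos : 0 < δ := by positivity
  rw [sub_le_comm, ← probReal_compl_eq_one_sub (Set.toFinite _).measurableSet]
  calc
    _ ≤ (bernMeasure V p).real {ω | δ + δ ≤ |(alphaSub G ω : ℝ) - p * Fintype.card V|} :=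
      measureReal_mono <| Set.compl_subset_comm.1 fun ω hω => by
        have alpha_near : |(alphaSub G ω : ℝ) - p * Fintype.card V| < δ + δ := not_le.1 hω
        rw [abs_lt] at alpha_near
        constructor <;> linarith
    _ ≤ p * (1 - p) * Fintype.card V / δ ^ 2 + p ^ 2 * eTotal G / δ :=
      bernMeasure_real_le_abs_alphaSub_sub G hp0.le hp1 δ_pos δ_pos
    _ ≤ p * Fintype.card V / δ ^ 2 + p ^ 2 * eTotal G / δ := by
      gcongr
      exact mul_le_of_le_one_right hp0.le (sub_le_self 1 hp0.le)
    _ = _ := by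
      rw [hδ]
      field_simp
      ring

end Concentration

theorem alpha_random_small_p_general {ι : Type*} {l : Filter ι} {V : ι → Type*}
    [∀ i, Fintype (V i)] (G : ∀ i, SimpleGraph (V i)) {p ε : ι → ℝ} (hε : ∀ i, 0 < ε i)
    (hp1 : ∀ i, p i ≤ 1)
    (hpN : Tendsto (fun i => ε i ^ 2 * (p i * Fintype.card (V i))) l atTop)
    (hpD : Tendsto (fun i => p i * (2 * eTotal (G i) / Fintype.card (V i)) / ε i) l (nhds 0)) :
    Tendsto (fun i => bernMeasure (V i) (p i)
      {ω | (1 - ε i) * (p i * Fintype.card (V i)) ≤ alphaSub (G i) ω ∧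
        alphaSub (G i) ω ≤ (1 + ε i) * (p i * Fintype.card (V i))}) l (nhds 1) := by
  have bound_tendsto : Tendsto (fun i => 1 - (4 / (ε i ^ 2 * (p i * Fintype.card (V i))) +
      p i * (2 * eTotal (G i) / Fintype.card (V i)) / ε i)) l (nhds 1) := by
    simpa using ((hpN.const_div_atTop 4).add hpD).const_sub 1
  refine tendsto_of_tendsto_of_tendsto_of_le_of_le'
    (by simpa using ENNReal.tendsto_ofReal bound_tendsto) tendsto_const_nhds ?_
    (.of_forall fun i => prob_le_one)
  filter_upwards [hpN.eventually_gt_atTop 0] with i hi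
  exact ENNReal.ofReal_le_of_le_toReal <| one_sub_le_bernMeasure_real_alphaSub (G i) (hp1 i)
    (pos_of_mul_pos_right hi (sq_nonneg _)) (hε i)

/-- For a sequence of graphs and `N^{-1} ≪ p ≪ D^{-1}`,
a.a.s. `α(H_n) = (1±ε)pN`. -/
theorem alpha_random_small_p (ε : ℝ) (hε0 : 0 < ε) (hε1 : ε < 1)
    (V : ℕ → Type) (iV : ∀ n, Fintype (V n)) (G : ∀ n, SimpleGraph (V n))
    (hN : Tendsto (fun n => Fintype.card (V n)) atTop atTop)
    (p : ℕ → ℝ) (hp0 : ∀ n, 0 < p n) (hp1 : ∀ n, p n ≤ 1)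
    (hpN : Tendsto (fun n => p n * (Fintype.card (V n) : ℝ)) atTop atTop)
    (hpD : Tendsto (fun n => p n * (2 * (eTotal (G n) : ℝ) / Fintype.card (V n)))
      atTop (nhds 0)) :
    Tendsto (fun n =>
      bernMeasure (V n) (p n)
        {ω | (1 - ε) * (p n * (Fintype.card (V n) : ℝ)) ≤ (alphaSub (G n) ω : ℝ) ∧
             (alphaSub (G n) ω : ℝ) ≤ (1 + ε) * (p n * (Fintype.card (V n) : ℝ))})
      atTop (nhds 1) :=
  alpha_random_small_p_general G (fun _ => hε0) hp1
    (hpN.const_mul_atTop (by positivity)) (by simpa using hpD.div_const ε)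
end

section
/- Let 0 < ε < 1, let λ, γ ∈ (0,1), and let G be a (λ,γ)-supersaturated graph on N vertices with average degree D > 0. Let p ∈ (0,1] satisfy 9·D^{−1} ≤ p ≤ λ^{ε}·(λγD)^{−1}, and let H = G[V_p] be the subgraph of G induced on the binomial random subset V_p of the vertex set. Then P( α(H) > (4N/(εγD))·ln(pD) ) ≤ exp( −(N/(γD))·ln(pD) ). -/
open MeasureTheory Filter Finset

/-!
A union bound over the independent sets `S` of `G` with more than `m` elements gives, for `θ ≥ 0`,
`P(α(G[V_p]) > m) ≤ ∑_{|S| > m} p ^ |S| ≤ e ^ (-θ m) * Z(p e ^ θ)`, where `Z` is the independence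
polynomial of `G`.  To bound `Z`, write `Z_A` for the independence polynomial of `G[A]` and use
`Z_A(x) = Z_{A - v}(x) + x Z_{A - N[v]}(x)` with `v` a vertex of large degree in `G[A]`, which
supersaturation provides as long as `|A|` is at least `λ N`.  Choosing `v` shrinks `A` by a factor
`1 - γ D / N`, so this happens only `O((N / γ D) log (1 / λ))` times before `A` becomes small, and
for small `A` the trivial bound `(1 + x) ^ |A|` suffices.
-/

section IndependencePolynomial

variable {V : Type*} {G : SimpleGraph V}

lemma isIndep_empty : IsIndep G ∅ := by
  simp [IsIndep]

lemma isIndep_insert_iff [DecidableEq V] {v : V} {T : Finset V} :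
    IsIndep G (insert v T) ↔ IsIndep G T ∧ ∀ w ∈ T, ¬ G.Adj v w := by
  simp only [IsIndep, forall_mem_insert, SimpleGraph.irrefl, not_false_eq_true, true_and,
    forall_and, G.adj_comm _ v]
  tauto

open scoped Classical in
/-- The independence polynomial of the induced subgraph `G[A]`, evaluated at `x`: the sum of
`x ^ #S` over the independent sets `S ⊆ A`. -/
noncomputable def indepPoly {R : Type*} [CommSemiring R] (G : SimpleGraph V) (A : Finset V)
    (x : R) : R :=
  ∑ S ∈ A.powerset with IsIndep G S, x ^ #S

lemma indepPoly_eq_erase_add [DecidableEq V] [DecidableRel G.Adj] {R : Type*} [CommSemiring R]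
    {A : Finset V} {v : V} (hv : v ∈ A) (x : R) :
    indepPoly G A x =
      indepPoly G (A.erase v) x + x * indepPoly G {w ∈ A.erase v | ¬ G.Adj v w} x := by
  classical
  obtain ⟨B, hvB, rfl⟩ : ∃ B, v ∉ B ∧ insert v B = A :=
    ⟨A.erase v, notMem_erase v A, insert_erase hv⟩
  have indep_insert (T : Finset V) :
      T ⊆ B ∧ IsIndep G (insert v T) ↔ T ⊆ {w ∈ B | ¬ G.Adj v w} ∧ IsIndep G T := by
    rw [isIndep_insert_iff]
    grind
  simp only [indepPoly, erase_insert hvB, sum_filter, sum_powerset_insert hvB]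
  congr 1
  simp only [← sum_filter, mul_sum]
  refine sum_congr (by ext T; simpa using indep_insert T) fun T hT ↦ ?_
  have hvT : v ∉ T := fun h ↦ hvB (filter_subset _ B (mem_powerset.1 (mem_filter.1 hT).1 h))
  rw [card_insert_of_notMem hvT, pow_succ']

lemma indepPoly_le_exp {x : ℝ} (hx : 0 ≤ x) (A : Finset V) :
    indepPoly G A x ≤ Real.exp (x * #A) := by
  classical
  calc indepPoly G A x ≤ ∑ S ∈ A.powerset, x ^ #S :=
        sum_le_sum_of_subset_of_nonneg (filter_subset _ _) fun _ _ _ ↦ by positivity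
    _ = (x + 1) ^ #A := by simpa using sum_pow_mul_eq_add_pow x 1 A
    _ ≤ Real.exp x ^ #A := by gcongr; exact Real.add_one_le_exp x
    _ = Real.exp (x * #A) := by rw [← Real.exp_nat_mul, mul_comm]

end IndependencePolynomial

section LogPotential

/-- The potential `b * min t 1 + c * log⁺ t` that controls `log (indepPoly G A x)`, where `t` is the
size of `A` relative to the threshold below which `A` counts as small.  It is linear up to `t = 1`
and logarithmic afterwards, and for `0 ≤ c ≤ b` it is increasing and concave on `[0, ∞)`. -/
noncomputable def logPotential (b c t : ℝ) : ℝ := b * min t 1 + c * Real.posLog t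

variable {b c s t : ℝ}

lemma logPotential_of_one_le (ht : 1 ≤ t) : logPotential b c t = b + c * Real.log t := by
  rw [logPotential, min_eq_right ht, mul_one, Real.posLog_eq_log (ht.trans (le_abs_self t))]

lemma mul_le_logPotential (hc : 0 ≤ c) (ht : t ≤ 1) : b * t ≤ logPotential b c t := by
  rw [logPotential, min_eq_left ht]
  exact le_add_of_nonneg_right (mul_nonneg hc Real.posLog_nonneg)

lemma logPotential_mono (hb : 0 ≤ b) (hc : 0 ≤ c) (hs : 0 ≤ s) (hst : s ≤ t) :
    logPotential b c s ≤ logPotential b c t := by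
  have := Real.posLog_le_posLog hs hst
  unfold logPotential
  gcongr

-- This is the tangent line inequality at `t`.
lemma logPotential_add_mul_one_sub_div_le (hc : 0 ≤ c) (hcb : c ≤ b) (hs : 0 ≤ s) (ht : 1 ≤ t) :
    logPotential b c s + c * (1 - s / t) ≤ logPotential b c t := by
  have ht₀ : 0 < t := by positivity
  rw [logPotential_of_one_le ht]
  rcases le_or_gt 1 s with hs1 | hs1
  · have hlog : Real.log s - Real.log t ≤ s / t - 1 := by
      rw [← Real.log_div (by positivity) ht₀.ne']
      exact Real.log_le_sub_one_of_pos (by positivity)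
    rw [logPotential_of_one_le hs1]
    linear_combination c * hlog
  · have hposLog : Real.posLog s = 0 :=
      (Real.posLog_eq_zero_iff s).2 (abs_le.2 ⟨by linarith, hs1.le⟩)
    have hlog : s * (1 - t⁻¹) ≤ Real.log t :=
      calc s * (1 - t⁻¹) ≤ 1 - t⁻¹ :=
            mul_le_of_le_one_left (sub_nonneg.2 (inv_le_one_of_one_le₀ ht)) hs1.le
        _ ≤ Real.log t := Real.one_sub_inv_le_log_of_pos ht₀
    have hslope : c * (1 - s) ≤ b * (1 - s) := by gcongr
    rw [logPotential, min_eq_left hs1.le, hposLog]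
    linear_combination c * hlog + hslope

lemma indepPoly_le_exp_logPotential_of_card_le {V : Type*} {G : SimpleGraph V} {A : Finset V}
    {K x : ℝ} (hK : 0 < K) (hx : 0 ≤ x) (hxK : x * K ≤ b) (hc : 0 ≤ c) (hA : #A ≤ K) :
    indepPoly G A x ≤ Real.exp (logPotential b c (#A / K)) := by
  refine (indepPoly_le_exp hx A).trans (Real.exp_le_exp.2 ?_)
  calc x * #A = x * K * (#A / K) := by field_simp
    _ ≤ b * (#A / K) := by gcongr
    _ ≤ logPotential b c (#A / K) := mul_le_logPotential hc ((div_le_one hK).2 hA)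

end LogPotential

section LocallyDense

variable {V : Type*} {G : SimpleGraph V} [DecidableRel G.Adj] {K δ x φ b : ℝ}

/-- Every set of at least `K` vertices contains a vertex adjacent to at least a `δ`-fraction of the
set.  Taking the empty set shows that this forces `0 < K`. -/
def LocallyDense (G : SimpleGraph V) [DecidableRel G.Adj] (K δ : ℝ) : Prop :=
  ∀ A : Finset V, K ≤ #A → ∃ v ∈ A, δ * #A ≤ #{w ∈ A | G.Adj v w}

namespace LocallyDense

lemma threshold_pos (hG : LocallyDense G K δ) : 0 < K := by
  by_contra! hK
  obtain ⟨v, hv, -⟩ := hG ∅ (by simpa using hK)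
  exact notMem_empty v hv

lemma exists_card_nonadj_le [DecidableEq V] (hG : LocallyDense G K δ) {A : Finset V}
    (hA : K ≤ #A) : ∃ v ∈ A, (#{w ∈ A.erase v | ¬ G.Adj v w} : ℝ) ≤ (1 - δ) * #A := by
  obtain ⟨v, hv, hdeg⟩ := hG A hA
  refine ⟨v, hv, ?_⟩
  have herase : (#{w ∈ A.erase v | ¬ G.Adj v w} : ℝ) ≤ #{w ∈ A | ¬ G.Adj v w} := by
    gcongr
    exact erase_subset v A
  have hsplit : (#{w ∈ A | G.Adj v w} + #{w ∈ A | ¬ G.Adj v w} : ℝ) = #A := by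
    exact_mod_cast card_filter_add_card_filter_not (s := A) (G.Adj v)
  linarith

lemma exists_logPotential_add_le [DecidableEq V] (hG : LocallyDense G K δ) (hδ : 0 < δ)
    (hφ : 0 ≤ φ) (hφb : φ / δ ≤ b) {A : Finset V} (hA : K ≤ #A) :
    ∃ v ∈ A, logPotential b (φ / δ) (#{w ∈ A.erase v | ¬ G.Adj v w} / K) + φ ≤
      logPotential b (φ / δ) (#A / K) := by
  have hK := hG.threshold_pos
  have hA₀ : (0 : ℝ) < #A := hK.trans_le hA
  obtain ⟨v, hv, hcard⟩ := hG.exists_card_nonadj_le hA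
  refine ⟨v, hv, le_trans ?_ (logPotential_add_mul_one_sub_div_le (by positivity) hφb
    (s := #{w ∈ A.erase v | ¬ G.Adj v w} / K) (by positivity) ((one_le_div hK).2 hA))⟩
  have hratio : (#{w ∈ A.erase v | ¬ G.Adj v w} / K) / (#A / K) ≤ 1 - δ := by
    rwa [div_div_div_cancel_right₀ hK.ne', div_le_iff₀ hA₀]
  calc _ = logPotential b (φ / δ) (#{w ∈ A.erase v | ¬ G.Adj v w} / K) + φ / δ * (1 - (1 - δ)) := by
        field_simp
        ring
    _ ≤ _ := by gcongr

theorem indepPoly_le_exp_logPotential (hG : LocallyDense G K δ) (hδ : 0 < δ) (hx : 0 ≤ x)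
    (hφ : 0 ≤ φ) (hφb : φ / δ ≤ b) (hxK : x * K ≤ b) (A : Finset V) :
    indepPoly G A x ≤
      Real.exp (logPotential b (φ / δ) (#A / K) + x * Real.exp (-φ) * #A) := by
  classical
  have hK := hG.threshold_pos
  have hc : 0 ≤ φ / δ := by positivity
  set a := x * Real.exp (-φ) with ha
  have ha₀ : 0 ≤ a := by positivity
  induction A using Finset.strongInduction with | H A ih => ?_
  rcases le_total (#A : ℝ) K with hA | hA
  · refine (indepPoly_le_exp_logPotential_of_card_le hK hx hxK hc hA).trans ?_
    gcongr
    exact le_add_of_nonneg_right (by positivity)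
  obtain ⟨v, hv, hstep⟩ := hG.exists_logPotential_add_le hδ hφ hφb hA
  set B := {w ∈ A.erase v | ¬ G.Adj v w}
  set P := logPotential b (φ / δ) (#A / K)
  have hBA : B ⊆ A.erase v := filter_subset _ _
  have hdelete : indepPoly G (A.erase v) x ≤ Real.exp (P + a * #(A.erase v)) := by
    refine (ih _ (erase_ssubset hv)).trans ?_
    gcongr
    refine logPotential_mono (hc.trans hφb) hc (by positivity) ?_
    gcongr
    exact erase_subset v A
  have hchoose : indepPoly G B x ≤ Real.exp (-φ) * Real.exp (P + a * #(A.erase v)) := by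
    refine (ih _ (hBA.trans_ssubset (erase_ssubset hv))).trans ?_
    rw [← Real.exp_add]
    have : a * #B ≤ a * #(A.erase v) := by gcongr
    exact Real.exp_le_exp.2 (by linarith)
  calc indepPoly G A x = indepPoly G (A.erase v) x + x * indepPoly G B x :=
        indepPoly_eq_erase_add hv x
    _ ≤ Real.exp (P + a * #(A.erase v)) +
          x * (Real.exp (-φ) * Real.exp (P + a * #(A.erase v))) := by gcongr
    _ = (a + 1) * Real.exp (P + a * #(A.erase v)) := by rw [ha]; ring
    _ ≤ Real.exp a * Real.exp (P + a * #(A.erase v)) := by gcongr; exact Real.add_one_le_exp a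
    _ = Real.exp (P + a * #A) := by
        rw [← Real.exp_add, ← card_erase_add_one hv]
        push_cast
        ring_nf

theorem indepPoly_univ_le [Fintype V] {q : ℝ}
    (hG : LocallyDense G (Fintype.card V * Real.exp (-φ)) δ) (hδ : 0 < δ) (hx : 0 ≤ x)
    (hφ : 0 ≤ φ) (hφq : φ ≤ q) (hxq : x * (Fintype.card V * Real.exp (-φ)) ≤ q / δ) :
    indepPoly G univ x ≤ Real.exp ((2 * q + φ ^ 2) / δ) := by
  have hN : (0 : ℝ) < Fintype.card V := pos_of_mul_pos_left hG.threshold_pos (Real.exp_pos _).le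
  have hratio : (Fintype.card V : ℝ) / (Fintype.card V * Real.exp (-φ)) = Real.exp φ := by
    rw [Real.exp_neg]
    field_simp
  refine (hG.indepPoly_le_exp_logPotential hδ hx hφ (b := q / δ) (by gcongr) hxq univ).trans ?_
  rw [card_univ, hratio, logPotential_of_one_le (Real.one_le_exp hφ), Real.log_exp]
  gcongr
  linear_combination hxq

end LocallyDense

end LocallyDense

section Supersaturated

variable {V : Type*} [Fintype V] {G : SimpleGraph V} [DecidableRel G.Adj]

lemma sum_card_adj_eq_two_mul_eCount (S : Finset V) :
    ∑ v ∈ S, #{w ∈ S | G.Adj v w} = 2 * eCount G S := by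
  classical
  rw [eCount, Nat.card_eq_fintype_card, ← SimpleGraph.edgeFinset_card,
    ← SimpleGraph.sum_degrees_eq_twice_card_edges, ← sum_coe_sort S]
  refine sum_congr rfl fun v _ ↦ ?_
  have hmap := SimpleGraph.map_neighborFinset_induce (G := G) (s := (S : Set V)) v
  rw [← SimpleGraph.card_neighborFinset_eq_degree]
  convert (congrArg card hmap).symm.trans (card_map _)
  ext w
  simp [and_comm]

lemma Supersaturated.locallyDense {lam gam K : ℝ} (hsat : Supersaturated G lam gam)
    (hK : 0 < K) (hlamK : lam * Fintype.card V ≤ K) :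
    LocallyDense G K (gam * (2 * eTotal G / Fintype.card V) / Fintype.card V) := by
  intro A hA
  have hA₀ : A.Nonempty := card_pos.1 (by exact_mod_cast hK.trans_le hA)
  refine exists_le_of_sum_le hA₀ ?_
  calc ∑ _v ∈ A, gam * (2 * eTotal G / Fintype.card V) / Fintype.card V * #A
      = 2 * (gam * (#A / Fintype.card V) ^ 2 * eTotal G) := by
        rw [sum_const, nsmul_eq_mul]
        ring
    _ ≤ 2 * eCount G A := by gcongr; exact hsat A (hlamK.trans hA)
    _ = ∑ v ∈ A, (#{w ∈ A | G.Adj v w} : ℝ) := by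
        exact_mod_cast (sum_card_adj_eq_two_mul_eCount A).symm

end Supersaturated

section TailBound

variable {V : Type*} [Fintype V] {G : SimpleGraph V} {p : ℝ}

lemma bernMeasure_forall_eq_true (hp : p ≤ 1) (S : Finset V) :
    bernMeasure V p {ω | ∀ v ∈ S, ω v = true} = ENNReal.ofReal p ^ #S := by
  classical
  have hset : {ω : V → Bool | ∀ v ∈ S, ω v = true} =
      Set.univ.pi fun v ↦ if v ∈ (S : Set V) then {true} else Set.univ := by
    rw [Set.univ_pi_ite]
    ext ω
    simp [Set.mem_pi]
  rw [hset, bernMeasure, Measure.pi_pi]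
  simp only [mem_coe, apply_ite, measure_univ, prod_ite_mem, univ_inter, prod_const,
    PMF.toMeasure_apply_singleton _ _ (measurableSet_singleton _)]
  congr 1
  exact congrArg _ (min_eq_left (Real.toNNReal_le_one.2 hp))

lemma exists_isIndep_card_eq_alphaSub (G : SimpleGraph V) (ω : V → Bool) :
    ∃ S : Finset V, (∀ v ∈ S, ω v = true) ∧ IsIndep G S ∧ #S = alphaSub G ω := by
  refine Nat.sSup_mem (s := {m | ∃ S : Finset V, (∀ v ∈ S, ω v = true) ∧ IsIndep G S ∧ #S = m})
    ⟨0, ∅, by simp, isIndep_empty, card_empty⟩ ⟨Fintype.card V, ?_⟩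
  rintro _ ⟨S, -, -, rfl⟩
  exact card_le_univ S

theorem bernMeasure_lt_alphaSub_le (hp0 : 0 ≤ p) (hp1 : p ≤ 1) {θ : ℝ} (hθ : 0 ≤ θ) (m : ℝ) :
    bernMeasure V p {ω | m < alphaSub G ω} ≤
      ENNReal.ofReal (Real.exp (-(θ * m)) * indepPoly G univ (p * Real.exp θ)) := by
  classical
  let large : Finset (Finset V) := {S | IsIndep G S ∧ m < #S}
  have hcover : {ω | m < alphaSub G ω} ⊆ ⋃ S ∈ large, {ω : V → Bool | ∀ v ∈ S, ω v = true} := by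
    intro ω hω
    obtain ⟨S, hSω, hS, hcard⟩ := exists_isIndep_card_eq_alphaSub G ω
    simp only [Set.mem_iUnion]
    exact ⟨S, by simpa [large, hS, hcard] using hω, hSω⟩
  have hweight (S : Finset V) (hS : m < #S) :
      p ^ #S ≤ Real.exp (-(θ * m)) * (p * Real.exp θ) ^ #S := by
    rw [mul_pow, mul_left_comm, ← Real.exp_nat_mul, ← Real.exp_add]
    refine le_mul_of_one_le_right (by positivity) (Real.one_le_exp ?_)
    linear_combination θ * hS.le
  calc bernMeasure V p {ω | m < alphaSub G ω}
      ≤ ∑ S ∈ large, bernMeasure V p {ω | ∀ v ∈ S, ω v = true} :=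
        (measure_mono hcover).trans (measure_biUnion_finset_le _ _)
    _ = ENNReal.ofReal (∑ S ∈ large, p ^ #S) := by
        rw [ENNReal.ofReal_sum_of_nonneg fun _ _ ↦ by positivity]
        simp only [bernMeasure_forall_eq_true hp1, ENNReal.ofReal_pow hp0]
    _ ≤ ENNReal.ofReal (Real.exp (-(θ * m)) * indepPoly G univ (p * Real.exp θ)) := by
        gcongr
        rw [indepPoly, mul_sum]
        refine (sum_le_sum fun S hS ↦ hweight S (mem_filter.1 hS).2.2).trans
          (sum_le_sum_of_subset_of_nonneg ?_ fun _ _ _ ↦ by positivity)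
        intro S hS
        simpa using (mem_filter.1 hS).2.1

theorem LocallyDense.bernMeasure_lt_alphaSub_le [DecidableRel G.Adj] {δ φ q θ : ℝ}
    (hG : LocallyDense G (Fintype.card V * Real.exp (-φ)) δ) (hδ : 0 < δ) (hφ : 0 ≤ φ)
    (hφq : φ ≤ q) (hp0 : 0 ≤ p) (hp1 : p ≤ 1) (hθ : 0 ≤ θ)
    (hxq : p * Real.exp θ * (Fintype.card V * Real.exp (-φ)) ≤ q / δ) (m : ℝ) :
    bernMeasure V p {ω | m < alphaSub G ω} ≤
      ENNReal.ofReal (Real.exp ((2 * q + φ ^ 2) / δ - θ * m)) := by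
  grw [_root_.bernMeasure_lt_alphaSub_le hp0 hp1 hθ m,
    hG.indepPoly_univ_le hδ (by positivity) hφ hφq hxq, ← Real.exp_add, neg_add_eq_sub]

end TailBound

section Parameters

variable {ε l L lam p y : ℝ}

lemma two_le_log_of_nine_le (hy : 9 ≤ y) : 2 ≤ Real.log y := by
  rw [Real.le_log_iff_exp_le (by linarith)]
  calc Real.exp 2 = Real.exp 1 ^ 2 := by rw [← Real.exp_nat_mul]; norm_num
    _ ≤ 3 ^ 2 := by gcongr; exact Real.exp_one_lt_three.le
    _ ≤ y := by linarith

lemma le_exp_posLog (y : ℝ) : y ≤ Real.exp (Real.posLog y) :=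
  (Real.le_exp_log y).trans (Real.exp_le_exp.2 (le_max_right _ _))

lemma le_exp_neg_mul_posLog (hlam0 : 0 < lam) (hlam1 : lam ≤ 1) (hε0 : 0 ≤ ε) (hε1 : ε ≤ 1)
    (hy0 : 0 < y) (hy : y ≤ lam ^ ε / lam) :
    lam ≤ Real.exp (-((1 + ε) * Real.posLog y)) := by
  have hlog : Real.log lam ≤ 0 := Real.log_nonpos hlam0.le hlam1
  have hposLog : Real.posLog y ≤ (1 - ε) * -Real.log lam := by
    refine max_le (mul_nonneg (by linarith) (by linarith)) ?_
    calc Real.log y ≤ Real.log (lam ^ ε / lam) := Real.log_le_log hy0 hy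
      _ = (1 - ε) * -Real.log lam := by
        rw [Real.log_div (by positivity) hlam0.ne', Real.log_rpow hlam0]
        ring
  rw [← Real.log_le_iff_le_exp hlam0, le_neg]
  calc (1 + ε) * Real.posLog y ≤ (1 + ε) * ((1 - ε) * -Real.log lam) := by gcongr
    _ = -Real.log lam - ε ^ 2 * -Real.log lam := by ring
    _ ≤ -Real.log lam := sub_le_self _ (mul_nonneg (sq_nonneg ε) (by linarith))

lemma mul_exp_log_add_mul_le {N δ q : ℝ} (hδ : 0 < δ) (hq : 0 < q) (hpδ : p * N * δ ≤ Real.exp l) :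
    p * Real.exp (Real.log q + ε * l) * (N * Real.exp (-((1 + ε) * l))) ≤ q / δ := by
  have hexp : Real.exp (Real.log q + ε * l) * Real.exp (-((1 + ε) * l)) = q * Real.exp (-l) := by
    rw [← Real.exp_add, show Real.log q + ε * l + -((1 + ε) * l) = Real.log q + -l by ring,
      Real.exp_add, Real.exp_log hq]
  rw [le_div_iff₀ hδ]
  calc _ = q * (p * N * δ * Real.exp (-l)) := by linear_combination p * N * δ * hexp
    _ ≤ q * (Real.exp l * Real.exp (-l)) := by gcongr
    _ = q := by rw [← Real.exp_add, add_neg_cancel, Real.exp_zero, mul_one]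

-- The term `(1 + ε)² l²` is absorbed by `2 q ε l = 4 L l`, and `2 q + L` by `2 q log q`.
lemma two_mul_add_sq_add_le (hε0 : 0 < ε) (hε1 : ε ≤ 1) (hL : 2 ≤ L) (hl0 : 0 ≤ l) (hlL : l ≤ L)
    {q : ℝ} (hq : q = 2 * L / ε) :
    2 * q + ((1 + ε) * l) ^ 2 + L ≤ 2 * q * (Real.log q + ε * l) := by
  have hqε : q * ε = 2 * L := by rw [hq, div_mul_cancel₀ _ hε0.ne']
  have hqL : 2 * L ≤ q := hq ▸ le_div_self (by linarith) hε0 hε1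
  have hlogq : 5 / 4 ≤ Real.log q := by
    calc (5 / 4 : ℝ) ≤ 2 * Real.log 2 := by linarith [Real.log_two_gt_d9]
      _ = Real.log (2 ^ 2) := by rw [Real.log_pow]; norm_num
      _ ≤ Real.log q := Real.log_le_log (by norm_num) (by linarith)
  have hsq : ((1 + ε) * l) ^ 2 ≤ 4 * L * l := by
    calc ((1 + ε) * l) ^ 2 = (1 + ε) ^ 2 * (l * l) := by ring
      _ ≤ (1 + 1) ^ 2 * (L * l) := by gcongr
      _ = 4 * L * l := by ring
  have hmul : 2 * q * (5 / 4) ≤ 2 * q * Real.log q := by gcongr; linarith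
  linear_combination hsq + hmul + 2⁻¹ * hqL - 2 * l * hqε

end Parameters

theorem LocallyDense.bernMeasure_div_lt_alphaSub_le {V : Type*} [Fintype V] {G : SimpleGraph V}
    [DecidableRel G.Adj] {δ ε l L p : ℝ}
    (hG : LocallyDense G (Fintype.card V * Real.exp (-((1 + ε) * l))) δ) (hδ : 0 < δ)
    (hε0 : 0 < ε) (hε1 : ε ≤ 1) (hl0 : 0 ≤ l) (hlL : l ≤ L) (hL : 2 ≤ L) (hp0 : 0 ≤ p)
    (hp1 : p ≤ 1) (hpδ : p * Fintype.card V * δ ≤ Real.exp l) :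
    bernMeasure V p {ω | 4 * L / (ε * δ) < alphaSub G ω} ≤
      ENNReal.ofReal (Real.exp (-(L / δ))) := by
  obtain ⟨q, hq⟩ : ∃ q, q = 2 * L / ε := ⟨_, rfl⟩
  -- With `φ = (1 + ε) l`, this is the largest `θ` for which the hypothesis on `p` ensures
  -- `p e ^ θ * N e ^ (-φ) ≤ q / δ`.
  obtain ⟨θ, hθ⟩ : ∃ θ, θ = Real.log q + ε * l := ⟨_, rfl⟩
  have hqL : 2 * L ≤ q := hq ▸ le_div_self (by linarith) hε0 hε1
  have hφq : (1 + ε) * l ≤ q := by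
    calc (1 + ε) * l ≤ (1 + 1) * L := by gcongr
      _ ≤ q := by linarith
  have hθ0 : 0 ≤ θ := hθ ▸ add_nonneg (Real.log_nonneg (by linarith)) (by positivity)
  have hxq := mul_exp_log_add_mul_le (ε := ε) hδ (by linarith : 0 < q) hpδ
  refine (hG.bernMeasure_lt_alphaSub_le hδ (by positivity) hφq hp0 hp1 hθ0 (hθ ▸ hxq) _).trans ?_
  gcongr
  have hexponent := two_mul_add_sq_add_le hε0 hε1 hL hl0 hlL hq
  calc (2 * q + ((1 + ε) * l) ^ 2) / δ - θ * (4 * L / (ε * δ))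
      = (2 * q + ((1 + ε) * l) ^ 2 - 2 * q * (Real.log q + ε * l)) / δ := by
        rw [hθ, hq]
        ring
    _ ≤ -L / δ := by gcongr; linarith
    _ = -(L / δ) := neg_div δ L

/-- Transference, flat range: tail bound on the independence
number of the random induced subgraph of a supersaturated graph. -/
theorem transference_flat_range {V : Type*} [Fintype V] (G : SimpleGraph V)
    (ε lam gam : ℝ) (hε0 : 0 < ε) (hε1 : ε < 1)
    (hlam : lam ∈ Set.Ioo (0 : ℝ) 1) (hgam : gam ∈ Set.Ioo (0 : ℝ) 1)
    (hsat : Supersaturated G lam gam)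
    (D : ℝ) (hD : D = 2 * (eTotal G : ℝ) / Fintype.card V) (hDpos : 0 < D)
    (p : ℝ) (hp0 : 0 < p) (hp1 : p ≤ 1)
    (hplo : 9 / D ≤ p) (hphi : p ≤ lam ^ ε / (lam * gam * D)) :
    bernMeasure V p
        {ω | 4 * (Fintype.card V : ℝ) / (ε * gam * D) * Real.log (p * D) <
          (alphaSub G ω : ℝ)} ≤
      ENNReal.ofReal (Real.exp (-((Fintype.card V : ℝ) / (gam * D)) * Real.log (p * D))) := by
  classical
  have hN : (0 : ℝ) < Fintype.card V := by
    by_contra! hN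
    exact hDpos.not_ge (hD ▸ div_nonpos_of_nonneg_of_nonpos (by positivity) hN)
  have hgD : 0 < gam * D := mul_pos hgam.1 hDpos
  have hpD : 9 ≤ p * D := (div_le_iff₀ hDpos).1 hplo
  have hlL : Real.posLog (p * (gam * D)) ≤ Real.log (p * D) := by
    rw [← Real.posLog_eq_log (le_abs.2 (.inl (by linarith)))]
    exact Real.posLog_le_posLog (by positivity) (by grw [hgam.2, one_mul])
  have hpgD : p * (gam * D) ≤ lam ^ ε / lam := by
    rwa [mul_assoc, ← div_div, le_div_iff₀ hgD] at hphi
  have hcutoff : lam * Fintype.card V ≤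
      Fintype.card V * Real.exp (-((1 + ε) * Real.posLog (p * (gam * D)))) := by
    grw [mul_comm, ← le_exp_neg_mul_posLog hlam.1 hlam.2.le hε0.le hε1.le (by positivity) hpgD]
  have hdense := hsat.locallyDense (by positivity) hcutoff
  rw [← hD] at hdense
  have htail := hdense.bernMeasure_div_lt_alphaSub_le (by positivity) hε0 hε1.le
    Real.posLog_nonneg hlL (two_le_log_of_nine_le hpD) hp0.le hp1
    (by rw [mul_assoc, mul_div_cancel₀ _ hN.ne']; exact le_exp_posLog _)
  convert htail using 4 <;> field_simp
end

section
/- Let G be a graph on N vertices, let γ > 0, and let 0 < ℓ < t be integers. Then there exist functions f_1, …, f_ℓ, where f_i assigns to each i-tuple of vertices of G a subset of V(G), such that for every independent set I of G with |I| ≥ t there is a sequence of distinct vertices x_1, …, x_ℓ ∈ I with the sets X_i = f_i(x_1,…,x_i) satisfying: (a) X_1 ⊇ X_2 ⊇ … ⊇ X_ℓ; (b) x_1, …, x_i ∉ X_i for all i ≤ ℓ; (c) I \ {x_1,…,x_i} ⊆ X_i for all i ≤ ℓ; and moreover either (i) |X_i| ≤ (1 − 2γ·e(G)/N²)·|X_{i−1}|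 for all 1 ≤ i ≤ ℓ (where X_0 = V(G)), or (ii) e(G[X_i]) < γ·(|X_i|²/N²)·e(G) for some 1 ≤ i ≤ ℓ. -/
open MeasureTheory Filter Finset

/-!
Put `β = 2γ e(G) / N²`. To shrink a container `A` of an independent set `J`, order `A` by repeatedly
removing a vertex of maximum degree in what is left. Let `x` be the first vertex of `J` in this
order and `W ⊇ J` the final segment of the order starting at `x`, which depends only on `A` and `x`.
If `x` has at most `(1 - β)|A|` non-neighbours in `W`, they form the next container. Otherwise `x`
has fewer than `β|W \ {x}|` neighbours in `W`, and by maximality so has every vertex of `W`, so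
`W \ {x}` spans few edges and is taken as the next container.
-/

lemma IsIndep.mono {V : Type*} {G : SimpleGraph V} {I J : Finset V} (hI : IsIndep G I)
    (hJI : J ⊆ I) : IsIndep G J :=
  fun a ha b hb => hI a (hJI ha) b (hJI hb)

section DegreeIn

variable {V : Type*} (G : SimpleGraph V) [DecidableRel G.Adj]

/-- The number of neighbours of `x` in `S`; the vertex `x` itself need not lie in `S`. -/
def degreeIn (S : Finset V) (x : V) : ℕ := #{y ∈ S | G.Adj x y}

/-- The vertices of `S` other than `x` that are not adjacent to `x`. -/
def nonNeighborsIn [DecidableEq V] (S : Finset V) (x : V) : Finset V :=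
  {y ∈ S.erase x | ¬ G.Adj x y}

variable {G}

lemma degreeIn_mono {S T : Finset V} (hST : S ⊆ T) (x : V) : degreeIn G S x ≤ degreeIn G T x :=
  card_le_card (filter_subset_filter _ hST)

variable (G) in
lemma degreeIn_erase_self [DecidableEq V] (S : Finset V) (x : V) :
    degreeIn G (S.erase x) x = degreeIn G S x := by
  rw [degreeIn, filter_erase, erase_eq_of_notMem (by simp), degreeIn]

variable (G) in
lemma degreeIn_add_card_nonNeighborsIn [DecidableEq V] (S : Finset V) (x : V) :
    degreeIn G S x + #(nonNeighborsIn G S x) = #(S.erase x) := by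
  rw [← degreeIn_erase_self]
  exact card_filter_add_card_filter_not _

lemma IsIndep.erase_subset_nonNeighborsIn [DecidableEq V] {J W : Finset V} {x : V}
    (hJ : IsIndep G J) (hJW : J ⊆ W) (hx : x ∈ J) : J.erase x ⊆ nonNeighborsIn G W x :=
  fun y hy => mem_filter.2 ⟨erase_subset_erase x hJW hy, hJ x hx y (mem_of_mem_erase hy)⟩

lemma degree_induce_eq_degreeIn (S : Finset V) (x : (S : Set V)) :
    (G.induce (S : Set V)).degree x = degreeIn G S x := by
  rw [← SimpleGraph.card_neighborFinset_eq_degree, ← card_map (.subtype (· ∈ (S : Set V))),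
    degreeIn]
  congr 1
  ext y
  simp [and_comm]

lemma sum_degreeIn_eq_two_mul_eCount [Fintype V] (S : Finset V) :
    ∑ x ∈ S, degreeIn G S x = 2 * eCount G S := by
  classical
  calc ∑ x ∈ S, degreeIn G S x
      = ∑ x : (S : Set V), (G.induce (S : Set V)).degree x := by
        simp only [degree_induce_eq_degreeIn]
        exact (sum_coe_sort S _).symm
    _ = 2 * eCount G S := by
        rw [SimpleGraph.sum_degrees_eq_twice_card_edges, SimpleGraph.edgeFinset_card,
          ← Nat.card_eq_fintype_card, eCount]

lemma two_mul_eCount_lt_of_forall_degreeIn_lt [Fintype V] {S : Finset V} {d : ℝ}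
    (hS : S.Nonempty) (hdeg : ∀ x ∈ S, (degreeIn G S x : ℝ) < d) :
    2 * (eCount G S : ℝ) < d * #S := by
  calc 2 * (eCount G S : ℝ) = ∑ x ∈ S, (degreeIn G S x : ℝ) := by
        exact_mod_cast (sum_degreeIn_eq_two_mul_eCount S).symm
    _ < ∑ _x ∈ S, d := sum_lt_sum_of_nonempty hS hdeg
    _ = d * #S := by rw [sum_const, nsmul_eq_mul, mul_comm]

lemma degreeIn_lt_of_lt_card_nonNeighborsIn [DecidableEq V] {A W : Finset V} {x : V} {β : ℝ}
    (hWA : W ⊆ A) (hne : (W.erase x).Nonempty)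
    (hlt : (1 - β) * #A < #(nonNeighborsIn G W x)) :
    (degreeIn G W x : ℝ) < β * #(W.erase x) := by
  have hsplit : (degreeIn G W x : ℝ) + #(nonNeighborsIn G W x) = #(W.erase x) := by
    exact_mod_cast degreeIn_add_card_nonNeighborsIn G W x
  rcases le_or_gt β 1 with hβ | hβ
  · have hcard : (#(W.erase x) : ℝ) ≤ #A := by
      exact_mod_cast card_le_card ((erase_subset x W).trans hWA)
    have hscaled := mul_le_mul_of_nonneg_left hcard (sub_nonneg.2 hβ)
    linarith
  · have hpos : (0 : ℝ) < #(W.erase x) := by exact_mod_cast hne.card_pos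
    calc (degreeIn G W x : ℝ) ≤ #(W.erase x) := hsplit ▸ le_add_of_nonneg_right (Nat.cast_nonneg _)
      _ < β * #(W.erase x) := lt_mul_of_one_lt_left hpos hβ

lemma two_mul_eCount_erase_lt_of_lt_card_nonNeighborsIn [Fintype V] [DecidableEq V]
    {A W : Finset V} {x : V} {β : ℝ} (hWA : W ⊆ A) (hne : (W.erase x).Nonempty)
    (hmax : ∀ y ∈ W, degreeIn G W y ≤ degreeIn G W x)
    (hlt : (1 - β) * #A < #(nonNeighborsIn G W x)) :
    2 * (eCount G (W.erase x) : ℝ) < β * (#(W.erase x) : ℝ) ^ 2 := by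
  rw [sq, ← mul_assoc]
  refine two_mul_eCount_lt_of_forall_degreeIn_lt hne fun y hy => ?_
  have hy_le : degreeIn G (W.erase x) y ≤ degreeIn G W x :=
    (degreeIn_mono (erase_subset x W) y).trans (hmax y (mem_of_mem_erase hy))
  exact (Nat.cast_le.2 hy_le).trans_lt (degreeIn_lt_of_lt_card_nonNeighborsIn hWA hne hlt)

end DegreeIn

-- `W x` is the final segment starting at `x` of an order of `A` in which each vertex has maximum
-- degree among the vertices not preceding it; the vertex provided for `J` is its first one.
lemma exists_maxDegree_finalSegments {V : Type*} (G : SimpleGraph V) [DecidableRel G.Adj]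
    (A : Finset V) :
    ∃ W : V → Finset V, ∀ J ⊆ A, J.Nonempty →
      ∃ x ∈ J, J ⊆ W x ∧ W x ⊆ A ∧ ∀ y ∈ W x, degreeIn G (W x) y ≤ degreeIn G (W x) x := by
  classical
  induction A using Finset.strongInduction with
  | H A ih =>
    rcases A.eq_empty_or_nonempty with rfl | hA
    · exact ⟨fun _ => ∅, fun J hJ hne => absurd (subset_empty.1 hJ) hne.ne_empty⟩
    obtain ⟨v, hv, hmax⟩ := exists_max_image A (degreeIn G A) hA
    obtain ⟨W, hW⟩ := ih (A.erase v) (erase_ssubset hv)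
    refine ⟨Function.update W v A, fun J hJ hne => ?_⟩
    by_cases hvJ : v ∈ J
    · exact ⟨v, hvJ, by simpa only [Function.update_self] using ⟨hJ, subset_rfl, hmax⟩⟩
    · obtain ⟨x, hx, hJW, hWA, hWmax⟩ := hW J (subset_erase.2 ⟨hJ, hvJ⟩) hne
      have hxv : x ≠ v := ne_of_mem_of_not_mem hx hvJ
      refine ⟨x, hx, ?_⟩
      rw [Function.update_of_ne hxv]
      exact ⟨hJW, hWA.trans (erase_subset v A), hWmax⟩

/-- A step of the container algorithm: the container `A` of the set `J` is replaced by the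
container `B` of `J` minus its vertex `x`. -/
structure IsContainerStep {V : Type*} [DecidableEq V] (J A : Finset V) (x : V) (B : Finset V) :
    Prop where
  mem : x ∈ J
  subset : B ⊆ A
  notMem : x ∉ B
  erase_subset : J.erase x ⊆ B

/-- The alternative governing the passage from the container `A` to the container `B`: either `B`
is smaller than `A` by the factor `1 - β`, or it spans fewer than `β|B|²/2` edges. -/
def ShrinksOrSparse {V : Type*} [Fintype V] (G : SimpleGraph V) (β : ℝ) (A B : Finset V) : Prop :=
  (#B : ℝ) ≤ (1 - β) * #A ∨ 2 * (eCount G B : ℝ) < β * (#B : ℝ) ^ 2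

lemma exists_containerStep {V : Type*} [Fintype V] [DecidableEq V] (G : SimpleGraph V) (β : ℝ)
    (A : Finset V) :
    ∃ g : V → Finset V, ∀ J ⊆ A, IsIndep G J → 1 < #J →
      ∃ x, IsContainerStep J A x (g x) ∧ ShrinksOrSparse G β A (g x) := by
  classical
  obtain ⟨W, hW⟩ := exists_maxDegree_finalSegments G A
  let N (x : V) : Finset V := nonNeighborsIn G (W x) x
  refine ⟨fun x => if (#(N x) : ℝ) ≤ (1 - β) * #A then N x else (W x).erase x,
    fun J hJA hJ hcard => ?_⟩
  obtain ⟨x, hx, hJW, hWA, hmax⟩ := hW J hJA (card_pos.1 (by lia))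
  have hNW : N x ⊆ (W x).erase x := filter_subset _ _
  have hWA' : (W x).erase x ⊆ A := (erase_subset x (W x)).trans hWA
  have hJW' : J.erase x ⊆ (W x).erase x := erase_subset_erase x hJW
  refine ⟨x, ?_⟩
  dsimp only
  split_ifs with hsmall
  · exact ⟨⟨hx, hNW.trans hWA', fun hxN => notMem_erase x _ (hNW hxN),
      hJ.erase_subset_nonNeighborsIn hJW hx⟩, .inl hsmall⟩
  · have hne : (J.erase x).Nonempty := (erase_nonempty hx).2 (one_lt_card_iff_nontrivial.1 hcard)
    exact ⟨⟨hx, hWA', notMem_erase x _, hJW'⟩,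
      .inr (two_mul_eCount_erase_lt_of_lt_card_nonNeighborsIn hWA (hne.mono hJW') hmax
        (not_le.1 hsmall))⟩

section History

variable {α : Type*}

/-- The list `[x 1, …, x i]`; the value `x 0` is ignored. -/
def history (x : ℕ → α) (i : ℕ) : List α := (List.range i).map fun j => x (j + 1)

lemma history_succ (x : ℕ → α) (i : ℕ) : history x (i + 1) = history x i ++ [x (i + 1)] := by
  simp [history, List.range_succ]

lemma mem_history {x : ℕ → α} {i : ℕ} {a : α} :
    a ∈ history x i ↔ ∃ j, 1 ≤ j ∧ j ≤ i ∧ x j = a := by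
  simp only [history, List.mem_map, List.mem_range]
  constructor
  · rintro ⟨j, hj, rfl⟩
    exact ⟨j + 1, by lia, by lia, rfl⟩
  · rintro ⟨j, hj, hji, rfl⟩
    exact ⟨j - 1, by lia, by rw [Nat.sub_add_cancel hj]⟩

lemma exists_seq_eq_apply_history (pick : List α → α) :
    ∃ x : ℕ → α, ∀ i, x (i + 1) = pick (history x i) := by
  let L (n : ℕ) : List α := (fun l => l ++ [pick l])^[n] []
  let x (n : ℕ) : α := pick (L (n - 1))
  have hL (i : ℕ) : history x i = L i := by
    induction i with
    | zero => rfl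
    | succ i ih =>
      rw [history_succ, ih]
      exact (Function.iterate_succ_apply' (fun l => l ++ [pick l]) i []).symm
  exact ⟨x, fun i => by rw [hL]; rfl⟩

lemma sdiff_history_succ [DecidableEq α] (I : Finset α) (x : ℕ → α) (i : ℕ) :
    I \ (history x (i + 1)).toFinset = (I \ (history x i).toFinset).erase (x (i + 1)) := by
  ext a
  simp only [history_succ, Finset.mem_sdiff, List.mem_toFinset, List.mem_append, List.mem_singleton,
    mem_erase]
  tauto

lemma card_le_card_sdiff_history_add [DecidableEq α] (I : Finset α) (x : ℕ → α) (i : ℕ) :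
    #I ≤ #(I \ (history x i).toFinset) + i := by
  have hlen : #(history x i).toFinset ≤ i := by
    simpa [history] using (history x i).toFinset_card_le
  have := le_card_sdiff (history x i).toFinset I
  lia

end History

/-- The first `ℓ` steps of the container algorithm run on the set `I`: it starts from a container
`X 0` of `I`, and its `i`-th step moves from `X (i - 1)` to `X i` by consuming the vertex `x i`. -/
structure IsContainerRun {V : Type*} [DecidableEq V] (I : Finset V) (ℓ : ℕ) (x : ℕ → V)
    (X : ℕ → Finset V) : Prop where
  subset_zero : I ⊆ X 0
  step : ∀ i < ℓ, IsContainerStep (I \ (history x i).toFinset) (X i) (x (i + 1)) (X (i + 1))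

namespace IsContainerRun

variable {V : Type*} [DecidableEq V] {I : Finset V} {ℓ : ℕ} {x : ℕ → V} {X : ℕ → Finset V}

lemma mem (h : IsContainerRun I ℓ x X) {i : ℕ} (hi : 1 ≤ i) (hiℓ : i ≤ ℓ) : x i ∈ I := by
  obtain ⟨k, rfl⟩ := Nat.exists_eq_add_of_le' hi
  exact (mem_sdiff.1 (h.step k hiℓ).mem).1

lemma ne (h : IsContainerRun I ℓ x X) {i j : ℕ} (hi : 1 ≤ i) (hij : i < j) (hjℓ : j ≤ ℓ) :
    x i ≠ x j := by
  obtain ⟨k, rfl⟩ := Nat.exists_eq_add_of_le' (hi.trans hij.le)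
  have hnew : x (k + 1) ∉ history x k := by
    simpa using (mem_sdiff.1 (h.step k hjℓ).mem).2
  exact fun heq => hnew (mem_history.2 ⟨i, hi, Nat.le_of_lt_succ hij, heq⟩)

lemma subset_of_le (h : IsContainerRun I ℓ x X) {i j : ℕ} (hij : i ≤ j) (hjℓ : j ≤ ℓ) :
    X j ⊆ X i := by
  induction j, hij using Nat.le_induction with
  | base => exact subset_rfl
  | succ j _ ih => exact (h.step j hjℓ).subset.trans (ih (Nat.le_of_succ_le hjℓ))

lemma notMem (h : IsContainerRun I ℓ x X) {i j : ℕ} (hiℓ : i ≤ ℓ) (hj : 1 ≤ j) (hji : j ≤ i) :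
    x j ∉ X i := by
  obtain ⟨k, rfl⟩ := Nat.exists_eq_add_of_le' hj
  exact fun hmem => (h.step k (hji.trans hiℓ)).notMem (h.subset_of_le hji hiℓ hmem)

lemma sdiff_history_subset (h : IsContainerRun I ℓ x X) {i : ℕ} (hiℓ : i ≤ ℓ) :
    I \ (history x i).toFinset ⊆ X i := by
  cases i with
  | zero => exact sdiff_subset.trans h.subset_zero
  | succ i => exact sdiff_history_succ I x i ▸ (h.step i hiℓ).erase_subset

lemma mem_of_forall_ne (h : IsContainerRun I ℓ x X) {i : ℕ} (hiℓ : i ≤ ℓ) {v : V} (hv : v ∈ I)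
    (hne : ∀ j, 1 ≤ j → j ≤ i → v ≠ x j) : v ∈ X i := by
  refine h.sdiff_history_subset hiℓ (mem_sdiff.2 ⟨hv, fun hmem => ?_⟩)
  obtain ⟨j, hj, hji, rfl⟩ := mem_history.1 (List.mem_toFinset.1 hmem)
  exact hne j hj hji rfl

lemma succ (h : IsContainerRun I ℓ x X)
    (hstep : IsContainerStep (I \ (history x ℓ).toFinset) (X ℓ) (x (ℓ + 1)) (X (ℓ + 1))) :
    IsContainerRun I (ℓ + 1) x X where
  subset_zero := h.subset_zero
  step i hi := by
    rcases Nat.lt_succ_iff_lt_or_eq.1 hi with hi | rfl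
    exacts [h.step i hi, hstep]

end IsContainerRun

lemma exists_containerRun {V : Type*} [Fintype V] [DecidableEq V] (G : SimpleGraph V) (β : ℝ) :
    ∃ f : List V → Finset V, f [] = univ ∧ ∀ (I : Finset V) (ℓ : ℕ), IsIndep G I → ℓ < #I →
      ∃ x : ℕ → V, IsContainerRun I ℓ x (fun i => f (history x i)) ∧
        ∀ i < ℓ, ShrinksOrSparse G β (f (history x i)) (f (history x (i + 1))) := by
  choose g hg using exists_containerStep G β
  let f (L : List V) : Finset V := L.foldl g univ
  have f_history_succ (x : ℕ → V) (i : ℕ) :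
      f (history x (i + 1)) = g (f (history x i)) (x (i + 1)) := by
    rw [history_succ]
    exact List.foldl_append
  refine ⟨f, rfl, fun I ℓ hI hℓ => ?_⟩
  obtain ⟨v, -⟩ := card_pos.1 (Nat.zero_lt_of_lt hℓ)
  have : Nonempty V := ⟨v⟩
  choose! pick hpick using hg
  obtain ⟨x, hx⟩ := exists_seq_eq_apply_history fun L => pick (f L) (I \ L.toFinset)
  have hstep (i : ℕ) (hi : i < ℓ) (hsub : I \ (history x i).toFinset ⊆ f (history x i)) :
      IsContainerStep (I \ (history x i).toFinset) (f (history x i)) (x (i + 1))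
          (f (history x (i + 1))) ∧
        ShrinksOrSparse G β (f (history x i)) (f (history x (i + 1))) := by
    rw [f_history_succ, hx]
    have hcard := card_le_card_sdiff_history_add I x i
    exact hpick _ _ hsub (hI.mono sdiff_subset) (by lia)
  have hrun (n : ℕ) (hn : n ≤ ℓ) : IsContainerRun I n x (fun i => f (history x i)) := by
    induction n with
    | zero => exact ⟨subset_univ I, by simp⟩
    | succ n ih =>
      have hrun_n := ih (Nat.le_of_succ_le hn)
      exact hrun_n.succ (hstep n hn (hrun_n.sdiff_history_subset le_rfl)).1
  exact ⟨x, hrun ℓ le_rfl, fun i hi => (hstep i hi ((hrun ℓ le_rfl).sdiff_history_subset hi.le)).2⟩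

lemma forall_shrinks_or_exists_sparse {V : Type*} [Fintype V] {G : SimpleGraph V} {β : ℝ} {ℓ : ℕ}
    {X : ℕ → Finset V} (h : ∀ i < ℓ, ShrinksOrSparse G β (X i) (X (i + 1))) :
    (∀ i, 1 ≤ i → i ≤ ℓ → (#(X i) : ℝ) ≤ (1 - β) * #(X (i - 1))) ∨
      ∃ i, 1 ≤ i ∧ i ≤ ℓ ∧ 2 * (eCount G (X i) : ℝ) < β * (#(X i) : ℝ) ^ 2 := by
  by_contra! hcon
  obtain ⟨⟨i, hi, hiℓ, hlarge⟩, hdense⟩ := hcon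
  obtain ⟨k, rfl⟩ := Nat.exists_eq_add_of_le' hi
  exact (h k hiℓ).elim hlarge.not_ge (hdense (k + 1) hi hiℓ).not_gt

/-- the greedy algorithm lemma. The functions `f_1, …, f_ℓ` are
packaged as a single function `f` on lists of vertices: `X_i = f [x_1, …, x_i]`
depends only on `x_1, …, x_i`. -/
theorem greedy_algorithm {V : Type*} [Fintype V] [DecidableEq V]
    (G : SimpleGraph V) (γ : ℝ) (hγ : 0 < γ) (ℓ t : ℕ) (hℓ : 0 < ℓ) (hℓt : ℓ < t) :
    ∃ f : List V → Finset V,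
      ∀ I : Finset V, IsIndep G I → t ≤ I.card →
        ∃ x : ℕ → V,
          (∀ i, 1 ≤ i → i ≤ ℓ → x i ∈ I) ∧
          (∀ i j, 1 ≤ i → i < j → j ≤ ℓ → x i ≠ x j) ∧
          (let X : ℕ → Finset V := fun i =>
            if i = 0 then Finset.univ else f ((List.range i).map fun j => x (j + 1))
           -- (a) the sets are nested
           (∀ i j, i ≤ j → j ≤ ℓ → X j ⊆ X i) ∧
           -- (b) `x_1, …, x_i ∉ X_i`
           (∀ i, i ≤ ℓ → ∀ j, 1 ≤ j → j ≤ i → x j ∉ X i) ∧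
           -- (c) `I \ {x_1, …, x_i} ⊆ X_i`
           (∀ i, i ≤ ℓ → ∀ v ∈ I, (∀ j, 1 ≤ j → j ≤ i → v ≠ x j) → v ∈ X i) ∧
           -- moreover, (i) or (ii)
           ((∀ i, 1 ≤ i → i ≤ ℓ →
              ((X i).card : ℝ) ≤ (1 - 2 * γ * (eTotal G : ℝ) / (Fintype.card V : ℝ) ^ 2) *
                ((X (i - 1)).card : ℝ)) ∨
            (∃ i, 1 ≤ i ∧ i ≤ ℓ ∧
              (eCount G (X i) : ℝ) <
                γ * ((X i).card : ℝ) ^ 2 / (Fintype.card V : ℝ) ^ 2 * (eTotal G : ℝ)))) := by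
  obtain ⟨f, f_nil, hf⟩ :=
    exists_containerRun G (2 * γ * (eTotal G : ℝ) / (Fintype.card V : ℝ) ^ 2)
  refine ⟨f, fun I hI hIt => ?_⟩
  obtain ⟨x, hrun, halt⟩ := hf I ℓ hI (hℓt.trans_le hIt)
  have hX (i : ℕ) : (if i = 0 then univ else f ((List.range i).map fun j => x (j + 1))) =
      f (history x i) := by
    split_ifs with hi
    exacts [hi ▸ f_nil.symm, rfl]
  refine ⟨x, fun _ => hrun.mem, fun _ _ => hrun.ne, ?_⟩
  simp only [hX]
  refine ⟨fun _ _ => hrun.subset_of_le, fun _ hi _ => hrun.notMem hi,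
    fun _ hi _ => hrun.mem_of_forall_ne hi, ?_⟩
  refine (forall_shrinks_or_exists_sparse halt).imp_right ?_
  rintro ⟨i, hi, hiℓ, hsparse⟩
  refine ⟨i, hi, hiℓ, lt_of_mul_lt_mul_left (hsparse.trans_eq ?_) zero_le_two⟩
  ring
end

section
/- Let λ, γ ∈ (0,1], let G be a (λ,γ)-supersaturated graph on N vertices with average degree D, let t ≥ 1 and 0 < ℓ < t be integers, and set ν = max{ (1 − γ·D/N)^{ℓ}, λ }. Then the number of independent sets of G of size exactly t is at most C(N, ℓ) · C(⌊ν·N⌋, t − ℓ). -/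
open MeasureTheory Filter Finset

/-!
Run a greedy search for a vertex of large degree. As long as the current vertex set `A` has more
than `M` elements, it contains a vertex `v` adjacent to at least `β * #A` vertices of `A`. An
independent set in `A` either avoids `v`, or consists of `v` and an independent set among the
non-neighbours of `v` in `A`, of which there are at most `(1 - β) * #A`. So after `ℓ` vertices have
been selected, at most `M` candidates remain for the other `t - ℓ`, and Pascal's rule shows that
the selections number at most `(#A).choose ℓ`. Supersaturation supplies `v` by averaging degrees,
with `β = γ * D / N` and `M = ⌊ν * N⌋`.
-/

section IndependentSets

variable {V : Type*} {G : SimpleGraph V} {A : Finset V} {M m s : ℕ}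

theorem IsIndep.subset {I J : Finset V} (hJ : IsIndep G J) (hIJ : I ⊆ J) : IsIndep G I :=
  fun a ha b hb => hJ a (hIJ ha) b (hIJ hb)

open scoped Classical in
/-- The independent sets of `G` that have size `s` and lie inside `A`: the family counted, by
recursion on `A`, in the greedy argument. -/
noncomputable def indepSetsIn (G : SimpleGraph V) (A : Finset V) (s : ℕ) : Finset (Finset V) :=
  {I ∈ A.powersetCard s | IsIndep G I}

theorem mem_indepSetsIn {I : Finset V} :
    I ∈ indepSetsIn G A s ↔ I ⊆ A ∧ #I = s ∧ IsIndep G I := by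
  classical
  rw [indepSetsIn, mem_filter, mem_powersetCard, and_assoc]

theorem card_indepSetsIn_le_choose : #(indepSetsIn G A s) ≤ (#A).choose s := by
  classical
  exact (card_filter_le _ _).trans_eq (card_powersetCard s A)

theorem erase_mem_indepSetsIn [DecidableEq V] [DecidableRel G.Adj] {v : V} {I : Finset V}
    (hI : I ∈ indepSetsIn G A (s + 1)) (hv : v ∈ I) :
    I.erase v ∈ indepSetsIn G {w ∈ A.erase v | ¬ G.Adj v w} s := by
  obtain ⟨hIA, hcard, hindep⟩ := mem_indepSetsIn.1 hI
  refine mem_indepSetsIn.2 ⟨fun w hw => ?_, ?_, hindep.subset (erase_subset v I)⟩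
  · exact mem_filter.2 ⟨erase_subset_erase v hIA hw, hindep v hv w (mem_of_mem_erase hw)⟩
  · rw [card_erase_of_mem hv, hcard, Nat.add_sub_cancel]

theorem card_indepSetsIn_succ_le [DecidableEq V] (G : SimpleGraph V) [DecidableRel G.Adj]
    (A : Finset V) (s : ℕ) (v : V) :
    #(indepSetsIn G A (s + 1)) ≤
      #(indepSetsIn G (A.erase v) (s + 1)) +
        #(indepSetsIn G {w ∈ A.erase v | ¬ G.Adj v w} s) := by
  have split_on_mem : indepSetsIn G A (s + 1) ⊆ indepSetsIn G (A.erase v) (s + 1) ∪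
      (indepSetsIn G {w ∈ A.erase v | ¬ G.Adj v w} s).image (insert v) := by
    intro I hI
    by_cases hv : v ∈ I
    · exact mem_union_right _ <|
        mem_image.2 ⟨I.erase v, erase_mem_indepSetsIn hI hv, insert_erase hv⟩
    · obtain ⟨hIA, hI⟩ := mem_indepSetsIn.1 hI
      exact mem_union_left _ (mem_indepSetsIn.2 ⟨subset_erase.2 ⟨hIA, hv⟩, hI⟩)
  grw [card_le_card split_on_mem, card_union_le, card_image_le]

theorem choose_le_choose_mul_choose_sub (n : ℕ) (hms : m ≤ s) :
    n.choose s ≤ n.choose m * n.choose (s - m) :=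
  calc n.choose s ≤ n.choose s * s.choose m :=
        Nat.le_mul_of_pos_right _ (Nat.choose_pos hms)
    _ = n.choose m * (n - m).choose (s - m) := Nat.choose_mul hms
    _ ≤ n.choose m * n.choose (s - m) := by gcongr; exact Nat.sub_le n m

theorem card_filter_not_adj_le [DecidableEq V] [DecidableRel G.Adj] {β : ℝ} {v : V}
    (hv : β * #A ≤ #{w ∈ A | G.Adj v w}) :
    (#{w ∈ A.erase v | ¬ G.Adj v w} : ℝ) ≤ (1 - β) * #A := by
  have hsub : #{w ∈ A.erase v | ¬ G.Adj v w} ≤ #{w ∈ A | ¬ G.Adj v w} :=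
    card_le_card (filter_subset_filter _ (erase_subset v A))
  have hsplit := card_filter_add_card_filter_not (s := A) (p := G.Adj v)
  rify at hsub hsplit
  linarith

theorem card_indepSetsIn_le_choose_mul_choose [DecidableRel G.Adj] {β : ℝ}
    (hdeg : ∀ A : Finset V, M < #A → ∃ v ∈ A, β * #A ≤ #{w ∈ A | G.Adj v w})
    (hms : m ≤ s) (hA : (1 - β) ^ m * #A < M + 1) :
    #(indepSetsIn G A s) ≤ (#A).choose m * M.choose (s - m) := by
  classical
  induction A using Finset.strongInduction generalizing m s with
  | H A ih =>
  rcases le_or_gt #A M with hAM | hMA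
  · calc #(indepSetsIn G A s) ≤ (#A).choose s := card_indepSetsIn_le_choose
      _ ≤ (#A).choose m * (#A).choose (s - m) := choose_le_choose_mul_choose_sub _ hms
      _ ≤ (#A).choose m * M.choose (s - m) := by gcongr
  obtain _ | m := m
  · rw [pow_zero, one_mul] at hA
    norm_cast at hA
    lia
  obtain ⟨s, rfl⟩ := Nat.exists_eq_add_one_of_ne_zero (Nat.ne_zero_of_lt hms)
  obtain ⟨v, hvA, hv⟩ := hdeg A hMA
  set B := A.erase v
  set C := {w ∈ B | ¬ G.Adj v w}
  have hBA : B ⊂ A := erase_ssubset hvA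
  have hCB : C ⊆ B := filter_subset _ _
  have hCA : (#C : ℝ) ≤ (1 - β) * #A := card_filter_not_adj_le hv
  have hβ : 0 ≤ 1 - β :=
    nonneg_of_mul_nonneg_left ((Nat.cast_nonneg _).trans hCA) (by exact_mod_cast hMA.pos)
  have hB_bound : (1 - β) ^ (m + 1) * #B < M + 1 :=
    hA.trans_le' (by gcongr)
  have hC_bound : (1 - β) ^ m * #C < M + 1 :=
    calc (1 - β) ^ m * #C ≤ (1 - β) ^ m * ((1 - β) * #A) := by gcongr
      _ = (1 - β) ^ (m + 1) * #A := by ring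
      _ < M + 1 := hA
  calc #(indepSetsIn G A (s + 1))
      ≤ #(indepSetsIn G B (s + 1)) + #(indepSetsIn G C s) := card_indepSetsIn_succ_le G A s v
    _ ≤ (#B).choose (m + 1) * M.choose (s + 1 - (m + 1)) + (#C).choose m * M.choose (s - m) :=
        add_le_add (ih B hBA hms hB_bound)
          (ih C (hCB.trans_ssubset hBA) (Nat.le_of_succ_le_succ hms) hC_bound)
    _ ≤ (#B).choose (m + 1) * M.choose (s - m) + (#B).choose m * M.choose (s - m) := by
        rw [Nat.add_sub_add_right]
        gcongr
    _ = (#A).choose (m + 1) * M.choose (s + 1 - (m + 1)) := by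
        rw [← card_erase_add_one hvA, Nat.choose_succ_succ', Nat.add_sub_add_right]
        ring

theorem degree_induce_eq_card_filter_adj [DecidableRel G.Adj] (v : A) :
    (G.induce (A : Set V)).degree v = #{w ∈ A | G.Adj v w} := by
  rw [← SimpleGraph.card_neighborFinset_eq_degree, ← card_map (.subtype (· ∈ A))]
  congr 1
  ext w
  simp [and_comm]

variable [Fintype V]

theorem sum_card_filter_adj_eq_two_mul_eCount (G : SimpleGraph V) [DecidableRel G.Adj]
    (A : Finset V) :
    ∑ v ∈ A, #{w ∈ A | G.Adj v w} = 2 * eCount G A := by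
  classical
  calc ∑ v ∈ A, #{w ∈ A | G.Adj v w}
      = ∑ v : A, (G.induce (A : Set V)).degree v := by
        rw [← sum_coe_sort A]
        exact sum_congr rfl fun v _ => (degree_induce_eq_card_filter_adj v).symm
    _ = 2 * eCount G A := by
        rw [eCount, Nat.card_eq_fintype_card, ← SimpleGraph.edgeFinset_card]
        exact SimpleGraph.sum_degrees_eq_twice_card_edges _

theorem Supersaturated.exists_le_card_filter_adj [DecidableRel G.Adj] {lam gam : ℝ}
    (hsat : Supersaturated G lam gam) (hne : A.Nonempty) (hA : lam * Fintype.card V ≤ #A) :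
    ∃ v ∈ A, gam * (2 * (eTotal G : ℝ) / Fintype.card V) / Fintype.card V * #A ≤
      #{w ∈ A | G.Adj v w} := by
  apply exists_le_of_sum_le hne
  calc ∑ _v ∈ A, gam * (2 * (eTotal G : ℝ) / Fintype.card V) / Fintype.card V * #A
      = 2 * (gam * ((#A : ℝ) / Fintype.card V) ^ 2 * eTotal G) := by
        rw [sum_const, nsmul_eq_mul]
        ring
    _ ≤ 2 * eCount G A := by gcongr; exact hsat A hA
    _ = ∑ v ∈ A, (#{w ∈ A | G.Adj v w} : ℝ) := by
        exact_mod_cast (sum_card_filter_adj_eq_two_mul_eCount G A).symm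

end IndependentSets

open scoped Classical in
/-- counting independent sets of a supersaturated graph. -/
theorem count_independent_sets {V : Type*} [Fintype V]
    (lam gam : ℝ) (hlam : lam ∈ Set.Ioc (0 : ℝ) 1) (hgam : gam ∈ Set.Ioc (0 : ℝ) 1)
    (G : SimpleGraph V) (hsat : Supersaturated G lam gam)
    (D : ℝ) (hD : D = 2 * (eTotal G : ℝ) / Fintype.card V)
    (t ℓ : ℕ) (ht : 1 ≤ t) (hℓ0 : 0 < ℓ) (hℓt : ℓ < t)
    (ν : ℝ) (hν : ν = max ((1 - gam * D / Fintype.card V) ^ ℓ) lam) :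
    ((Finset.univ : Finset (Finset V)).filter fun I => IsIndep G I ∧ I.card = t).card ≤
      (Fintype.card V).choose ℓ * (⌊ν * Fintype.card V⌋₊).choose (t - ℓ) := by
  subst hD hν
  set N := Fintype.card V
  set β := gam * (2 * (eTotal G : ℝ) / N) / N
  set ν := max ((1 - β) ^ ℓ) lam
  have hfloor : ν * N < ⌊ν * N⌋₊ + 1 := Nat.lt_floor_add_one _
  have hdeg : ∀ A : Finset V, ⌊ν * N⌋₊ < #A → ∃ v ∈ A, β * #A ≤ #{w ∈ A | G.Adj v w} := by
    intro A hA
    refine hsat.exists_le_card_filter_adj (card_pos.1 hA.pos) ?_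
    calc lam * N ≤ ν * N := by gcongr; exact le_max_right _ _
      _ ≤ ⌊ν * N⌋₊ + 1 := hfloor.le
      _ ≤ #A := by exact_mod_cast hA
  have hcontract : (1 - β) ^ ℓ * #(univ : Finset V) < ⌊ν * N⌋₊ + 1 :=
    hfloor.trans_le' (by rw [card_univ]; gcongr; exact le_max_left _ _)
  have hfamily : ({I | IsIndep G I ∧ #I = t} : Finset (Finset V)) = indepSetsIn G univ t := by
    ext I
    rw [mem_filter_univ, mem_indepSetsIn, and_comm, eq_true (subset_univ I), true_and]
  rw [hfamily]
  exact card_indepSetsIn_le_choose_mul_choose hdeg hℓt.le hcontract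
end
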